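/- Let Q = x^30 - 13x^29 + 116x^28 - 899x^27 + 6003x^26 - 33002x^25 + 142158x^24 - 437871x^23 + 599981x^22 + 3161522x^21 - 30157709x^20 + 149069425x^19 - 545068137x^18 + 1602112888x^17 - 3929042061x^16 + 8240756348x^15 - 15020495335x^14 + 23992472995x^13 - 33394267804x^12 + 40034881756x^11 - 40888329774x^10 + 35730188833x^9 - 27316581262x^8 + 17713731976x^7 - 7068248851x^6 - 1463296732x^5 + 4054490087x^4 - 2555610007x^3 + 2573924261x^2 + 2363203645x - 261910751 ∈ ℚ[x]. The Galois group of Q over ℚ (i.e., the Galois group of its splitting field over ℚ) is isomorphic to PGL₂(F₂₉). -/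

import Mathlib

/-!
There are polynomials `M(x)` and `R(x, y) = R(y, x)` such that `R(x, y)² = 29 M(x) M(y)` for any
two distinct roots of `Q`. Hence `R(x, y) R(y, z) R(z, x) = ± √29³ M(x) M(y) M(z)` for any three
distinct roots. Reduction modulo a prime above 921157, where `Q` splits completely, labels the
roots by the projective line over `𝔽₂₉` in such a way that these signs form the Paley two-graph.
The Galois group thus preserves the Paley two-graph up to the sign by which it acts on `√29`. By
Carlitz's theorem on maps preserving squares, it therefore acts through `PGL₂(𝔽₂₉)`, and the
elements moving `√29` lie outside `PSL₂(𝔽₂₉)`. A Frobenius element at 197, where `Q` has exactly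
one root and this root is simple, fixes exactly one root of `Q`, so it is a nontrivial unipotent.
Since `Q` has no rational root, this fixed point is moved by the group, and unipotents with two
different fixed points generate `PSL₂(𝔽₂₉)`.

The relation between `R` and `M` is a congruence of bivariate polynomials modulo `Q(X)` and `Q(Y)`.
It is verified by Kronecker substitution, that is, after substituting a large power of two for `X`.
-/

open Polynomial Matrix

noncomputable def Q : Polynomial ℚ :=
  X^30 - 13*X^29 + 116*X^28 - 899*X^27 + 6003*X^26 - 33002*X^25 + 142158*X^24 - 437871*X^23 + 599981*X^22 + 3161522*X^21 - 30157709*X^20 + 149069425*X^19 - 545068137*X^18 + 1602112888*X^17 - 3929042061*X^16 + 8240756348*X^15 - 15020495335*X^14 + 23992472995*X^13 - 33394267804*X^12 + 40034881756*X^11 - 40888329774*X^10 + 35730188833*X^9 - 27316581262*X^8 + 17713731976*X^7 - 7068248851*X^6 - 1463296732*X^5 + 4054490087*X^4 - 2555610007*X^3 + 2573924261*X^2 + 2363203645*X - 261910751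

section WeightedNorm

open scoped NNReal

variable {A : Type*} [CommRing A] (N : RingSeminorm A) (w : ℝ≥0)

/-- The weighted `ℓ¹`-size `∑ N (fᵢ) wⁱ` of a polynomial `f`. -/
noncomputable def weightedSum (f : A[X]) : ℝ := f.sum fun i a => N a * w ^ i

lemma weightedSum_monomial (i : ℕ) (a : A) :
    weightedSum N w (monomial i a) = N a * w ^ i :=
  sum_monomial_index a _ (by rw [map_zero, zero_mul])

lemma weightedSum_zero : weightedSum N w 0 = 0 := sum_zero_index _

lemma weightedSum_add_le (f g : A[X]) :
    weightedSum N w (f + g) ≤ weightedSum N w f + weightedSum N w g := by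
  have hN (i : ℕ) : N 0 * (w : ℝ) ^ i = 0 := by rw [map_zero, zero_mul]
  let n := max f.natDegree g.natDegree + 1
  unfold weightedSum
  rw [sum_over_range' f hN n (by omega), sum_over_range' g hN n (by omega),
    sum_over_range' (f + g) hN n (Nat.lt_succ_of_le (natDegree_add_le f g)),
    ← Finset.sum_add_distrib]
  refine Finset.sum_le_sum fun i _ => ?_
  rw [coeff_add, ← add_mul]
  exact mul_le_mul_of_nonneg_right (map_add_le_add N _ _) (by positivity)

lemma weightedSum_sum_le {ι : Type*} (s : Finset ι) (f : ι → A[X]) :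
    weightedSum N w (∑ i ∈ s, f i) ≤ ∑ i ∈ s, weightedSum N w (f i) :=
  Finset.le_sum_of_subadditive _ (weightedSum_zero N w).le (weightedSum_add_le N w) s f

lemma weightedSum_mul_le (f g : A[X]) :
    weightedSum N w (f * g) ≤ weightedSum N w f * weightedSum N w g := by
  simp only [mul_eq_sum_sum, sum_def]
  calc weightedSum N w
        (∑ i ∈ f.support, ∑ j ∈ g.support, monomial (i + j) (f.coeff i * g.coeff j))
      ≤ ∑ i ∈ f.support, ∑ j ∈ g.support,
          weightedSum N w (monomial (i + j) (f.coeff i * g.coeff j)) :=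
        (weightedSum_sum_le ..).trans (Finset.sum_le_sum fun i _ => weightedSum_sum_le ..)
    _ ≤ ∑ i ∈ f.support, ∑ j ∈ g.support,
          N (f.coeff i) * w ^ i * (N (g.coeff j) * w ^ j) := by
        refine Finset.sum_le_sum fun i _ => Finset.sum_le_sum fun j _ => ?_
        rw [weightedSum_monomial, pow_add, mul_mul_mul_comm]
        exact mul_le_mul_of_nonneg_right (map_mul_le_mul N _ _) (by positivity)
    _ = weightedSum N w f * weightedSum N w g := by
        simp only [weightedSum, sum_def, Finset.sum_mul_sum]

/-- The weighted `ℓ¹`-size as a seminorm on the ring of polynomials, so that the construction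
can be iterated for bivariate polynomials. -/
noncomputable def weightedNorm : RingSeminorm A[X] where
  toFun := weightedSum N w
  map_zero' := weightedSum_zero N w
  add_le' := weightedSum_add_le N w
  neg' f := by simp [weightedSum, sum_def]
  mul_le' := weightedSum_mul_le N w

lemma weightedNorm_monomial (i : ℕ) (a : A) :
    weightedNorm N w (monomial i a) = N a * w ^ i :=
  weightedSum_monomial N w i a

lemma weightedNorm_C (a : A) : weightedNorm N w (C a) = N a := by
  rw [← monomial_zero_left, weightedNorm_monomial, pow_zero, mul_one]

lemma weightedNorm_X_le (hN : N 1 ≤ 1) : weightedNorm N w X ≤ w := by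
  rw [← monomial_one_one_eq_X, weightedNorm_monomial, pow_one]
  exact mul_le_of_le_one_left w.2 hN

lemma weightedNorm_map_C (v : ℝ≥0) (f : A[X]) :
    weightedNorm (weightedNorm N v) w (f.map C) = weightedNorm N w f := by
  change weightedSum _ _ _ = weightedSum _ _ _
  simp only [weightedSum, sum_def, support_map_of_injective _ C_injective, coeff_map,
    weightedNorm_C]

variable {N w}

lemma X_mul_modByMonic {q : A[X]} (hq : q.Monic) {n : ℕ} (hn : q.natDegree = n + 1) (f : A[X]) :
    (X * f) %ₘ q = X * (f %ₘ q) - C ((f %ₘ q).coeff n) * q := by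
  nontriviality A
  have hdeg : ∀ k, n < k → (f %ₘ q).coeff k = 0 := fun k hk =>
    coeff_eq_zero_of_degree_lt <| (degree_modByMonic_lt f hq).trans_le <| by
      rw [degree_eq_natDegree hq.ne_zero, hn]; exact_mod_cast hk
  refine (div_modByMonic_unique (X * (f /ₘ q) + C ((f %ₘ q).coeff n)) _ hq ⟨?_, ?_⟩).2
  · linear_combination X * modByMonic_add_div f q
  · rw [degree_eq_natDegree hq.ne_zero, hn, degree_lt_iff_coeff_zero]
    rintro (_ | k) hk
    · omega
    rw [coeff_sub, coeff_X_mul, coeff_C_mul]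
    rcases hk.eq_or_lt with h | h
    · rw [← h, ← hn, hq.coeff_natDegree, mul_one, ← Nat.succ_injective h, sub_self]
    · rw [hdeg k (by omega), coeff_eq_zero_of_natDegree_lt (p := q) (by omega), mul_zero, sub_zero]

lemma coeff_monomial_modByMonic_le {q : A[X]} (hq : q.Monic)
    (hw : ∀ k < q.natDegree, N (q.coeff k) + 1 ≤ w) (a : A) (i k : ℕ) :
    N ((monomial i a %ₘ q).coeff k) ≤ N a * w ^ i := by
  rcases subsingleton_or_nontrivial A with _ | _
  · rw [Subsingleton.elim (coeff _ k) 0, map_zero]; positivity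
  by_cases hk : k < q.natDegree
  case neg =>
    rw [coeff_eq_zero_of_degree_lt, map_zero]
    · positivity
    · exact (degree_modByMonic_lt _ hq).trans_le
        (degree_le_natDegree.trans (by exact_mod_cast not_lt.mp hk))
  obtain ⟨n, hn⟩ : ∃ n, q.natDegree = n + 1 := ⟨_, (Nat.sub_add_cancel (Nat.zero_lt_of_lt hk)).symm⟩
  induction i generalizing k with
  | zero =>
    rw [monomial_zero_left, (modByMonic_eq_self_iff hq).mpr, pow_zero, mul_one, coeff_C]
    · split_ifs
      · rfl
      · rw [map_zero]; positivity
    · exact degree_C_le.trans_lt (natDegree_pos_iff_degree_pos.mp (Nat.zero_lt_of_lt hk))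
  | succ i ih =>
    set r := monomial i a %ₘ q
    have hstep : (monomial (i + 1) a %ₘ q).coeff k = (X * r).coeff k - r.coeff n * q.coeff k := by
      rw [← X_mul_monomial, X_mul_modByMonic hq hn, coeff_sub, coeff_C_mul]
    have hX : N ((X * r).coeff k) ≤ N a * w ^ i := by
      cases k with
      | zero => rw [coeff_X_mul_zero, map_zero]; positivity
      | succ k => rw [coeff_X_mul]; exact ih k (by omega)
    have hr : N (r.coeff n * q.coeff k) ≤ N a * w ^ i * N (q.coeff k) :=
      (map_mul_le_mul N _ _).trans
        (mul_le_mul_of_nonneg_right (ih n (by omega)) (apply_nonneg N _))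
    calc N ((monomial (i + 1) a %ₘ q).coeff k)
        ≤ N a * w ^ i + N a * w ^ i * N (q.coeff k) := by
          rw [hstep]; exact (map_sub_le_add N _ _).trans (add_le_add hX hr)
      _ = N a * w ^ i * (N (q.coeff k) + 1) := by ring
      _ ≤ N a * w ^ i * w := mul_le_mul_of_nonneg_left (hw k hk) (by positivity)
      _ = N a * w ^ (i + 1) := by ring

lemma coeff_modByMonic_le_weightedNorm {q : A[X]} (hq : q.Monic)
    (hw : ∀ k < q.natDegree, N (q.coeff k) + 1 ≤ w) (f : A[X]) (k : ℕ) :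
    N ((f %ₘ q).coeff k) ≤ weightedNorm N w f := by
  have hf : (f %ₘ q).coeff k = ∑ i ∈ f.support, (monomial i (f.coeff i) %ₘ q).coeff k := by
    conv_lhs => rw [f.as_sum_support, ← modByMonicHom_apply, map_sum, finsetSum_coeff]
    rfl
  rw [hf]
  exact (Finset.le_sum_of_subadditive N (map_zero N).le (map_add_le_add N) _ _).trans
    (Finset.sum_le_sum fun i _ => coeff_monomial_modByMonic_le hq hw _ i k)

end WeightedNorm

section KroneckerSubstitution

open scoped NNReal Polynomial.Bivariate

lemma eval_pos_of_abs_coeff_lt {g : ℤ[X]} {B : ℤ} (hlead : 0 < g.leadingCoeff)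
    (hB : ∀ k < g.natDegree, |g.coeff k| < B) : 0 < g.eval B := by
  have hlow : -(B ^ g.natDegree - 1) ≤ ∑ k ∈ Finset.range g.natDegree, g.coeff k * B ^ k := by
    rw [← mul_geom_sum, Finset.mul_sum, ← Finset.sum_neg_distrib]
    refine Finset.sum_le_sum fun k hk => ?_
    have hk := hB k (Finset.mem_range.mp hk)
    have hBk : 0 ≤ B ^ k := pow_nonneg ((abs_nonneg _).trans hk.le) k
    nlinarith [neg_abs_le (g.coeff k)]
  have hpow : 0 ≤ B ^ g.natDegree := by
    rcases Nat.eq_zero_or_pos g.natDegree with h | h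
    · simp [h]
    · exact pow_nonneg ((abs_nonneg _).trans (hB 0 h).le) _
  rw [eval_eq_sum_range, Finset.sum_range_succ, coeff_natDegree]
  nlinarith

lemma eval_ne_zero_of_abs_coeff_lt {g : ℤ[X]} {B : ℤ} (hg : g ≠ 0)
    (hB : ∀ k < g.natDegree, |g.coeff k| < B) : g.eval B ≠ 0 := by
  rcases lt_or_gt_of_ne (leadingCoeff_ne_zero.mpr hg) with h | h
  · have := eval_pos_of_abs_coeff_lt (g := -g) (B := B) (by rwa [leadingCoeff_neg, neg_pos])
      (by simpa using hB)
    rw [eval_neg, neg_pos] at this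
    exact this.ne
  · exact (eval_pos_of_abs_coeff_lt h hB).ne'

lemma normRingSeminorm_int (n : ℤ) : normRingSeminorm ℤ n = ((|n| : ℤ) : ℝ) := by
  rw [Int.cast_abs]; exact Int.norm_eq_abs n

variable {q : ℤ[X]} {w : ℝ≥0} {B : ℤ}

theorem dvd_of_eval_dvd_eval (hq : q.Monic)
    (hw : ∀ k < q.natDegree, normRingSeminorm ℤ (q.coeff k) + 1 ≤ w) {f : ℤ[X]}
    (hB : weightedNorm (normRingSeminorm ℤ) w f + w ≤ B) (h : q.eval B ∣ f.eval B) : q ∣ f := by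
  rw [← modByMonic_eq_zero_iff_dvd hq]
  set r := f %ₘ q with hr
  have hdeg : r.degree < q.degree := degree_modByMonic_lt f hq
  have hcoeff (k : ℕ) (hk : k < q.natDegree) : |q.coeff k| + |r.coeff k| < B := by
    have hrk := coeff_modByMonic_le_weightedNorm hq hw f k
    have hqk := hw k hk
    rw [normRingSeminorm_int] at hrk hqk
    have : ((|q.coeff k| + |r.coeff k| + 1 : ℤ) : ℝ) ≤ B := by push_cast at *; linarith
    exact_mod_cast this
  have hpos {s : ℤ[X]} (hs : s.degree < q.degree) (hsr : ∀ k, |s.coeff k| = |r.coeff k|) :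
      0 < (q + s).eval B := by
    refine eval_pos_of_abs_coeff_lt (by rw [hq.add_of_left hs]; exact one_pos) fun k hk => ?_
    rw [natDegree_add_eq_left_of_degree_lt hs] at hk
    exact coeff_add q s k ▸ (abs_add_le _ _).trans_lt (hsr k ▸ hcoeff k hk)
  have hlt : |r.eval B| < q.eval B := by
    have h₁ := hpos hdeg fun _ => rfl
    have h₂ := hpos (s := -r) (by rwa [degree_neg]) (by simp)
    rw [eval_add] at h₁ h₂
    rw [eval_neg] at h₂
    exact abs_lt.mpr ⟨by linarith, by linarith⟩
  have hdvd : q.eval B ∣ r.eval B := by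
    rw [← modByMonic_add_div f q, eval_add, eval_mul] at h
    exact (Int.dvd_add_left (dvd_mul_right _ _)).mp h
  by_contra hr0
  refine eval_ne_zero_of_abs_coeff_lt hr0 (fun k hk => ?_) (Int.eq_zero_of_abs_lt_dvd hdvd hlt)
  exact (le_add_of_nonneg_left (abs_nonneg _)).trans_lt
    (hcoeff k (hk.trans (natDegree_lt_natDegree hr0 hdeg)))

lemma map_C_map_evalRingHom {R : Type*} [CommRing R] (b : R) (f : R[X]) :
    (f.map C).map (evalRingHom b) = f := by
  rw [Polynomial.map_map, show (evalRingHom b).comp C = RingHom.id R by ext; simp,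
    Polynomial.map_id]

/-- Kronecker substitution: the coefficients of the remainder of `F` modulo `q(X)` and `q(Y)` are
too small compared to `B` for the substitution `X = B` to lose information. -/
theorem mem_span_of_map_eval_mem_span (hq : q.Monic)
    (hw : ∀ k < q.natDegree, normRingSeminorm ℤ (q.coeff k) + 1 ≤ w) {F : ℤ[X][Y]}
    (hB : weightedNorm (weightedNorm (normRingSeminorm ℤ) w) w F + w ≤ B)
    (h : F.map (evalRingHom B) ∈ Ideal.span {q, C (q.eval B)}) :
    F ∈ Ideal.span {q.map C, C q} := by
  have hqC : (q.map C).Monic := hq.map C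
  have hcoeff (k : ℕ) : q ∣ (F %ₘ q.map C).coeff k := by
    refine dvd_of_eval_dvd_eval hq hw (B := B) ((add_le_add_left ?_ _).trans hB) ?_
    · refine coeff_modByMonic_le_weightedNorm hqC (fun k hk => ?_) F k
      rw [coeff_map, weightedNorm_C]
      exact hw k (hq.natDegree_map C ▸ hk)
    · obtain ⟨g, f, hgf⟩ := Ideal.mem_span_pair.mp h
      have hmod : (F %ₘ q.map C).map (evalRingHom B) = C (q.eval B) * (f %ₘ q) := by
        rw [map_modByMonic _ hqC, map_C_map_evalRingHom, ← hgf, add_modByMonic,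
          mul_self_modByMonic hq, zero_add, mul_comm, ← smul_eq_C_mul, smul_modByMonic,
          smul_eq_C_mul]
      rw [← coe_evalRingHom, ← coeff_map, hmod, coeff_C_mul]
      exact dvd_mul_right _ _
  obtain ⟨G, hG⟩ := C_dvd_iff_dvd_coeff q (F %ₘ q.map C) |>.mpr hcoeff
  exact Ideal.mem_span_pair.mpr ⟨F /ₘ q.map C, G, by
    linear_combination modByMonic_add_div F (q.map C) - hG⟩

end KroneckerSubstitution

section CoefficientLists

open scoped NNReal Polynomial.Bivariate

variable {R S : Type*} [CommRing R] [CommRing S]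

/-- The polynomial with a given list of coefficients, constant coefficient first. -/
noncomputable def ofCoeffs (l : List R) : R[X] := l.foldr (fun c f => C c + X * f) 0

/-- Horner evaluation of `ofCoeffs l`. -/
def evalCoeffs (l : List R) (x : R) : R := l.foldr (fun c s => c + x * s) 0

/-- The coefficient list of `c * f + g`. -/
def mulAddCoeffs (c : R) : List R → List R → List R
  | [], g => g
  | a :: f, [] => c * a :: mulAddCoeffs c f []
  | a :: f, b :: g => (c * a + b) :: mulAddCoeffs c f g

/-- The coefficient list of `f * g`. -/
def mulCoeffs (f g : List R) : List R := f.foldr (fun c s => mulAddCoeffs c g (0 :: s)) []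

/-- The coefficient list of the remainder of `f` modulo the polynomial `q`, whose list must end
in the leading coefficient `1`. -/
def modCoeffs (q f : List R) : List R :=
  f.foldr (fun c r => mulAddCoeffs (-(c :: r).getD (q.length - 1) 0) q (c :: r)) []

@[simp] lemma ofCoeffs_nil : ofCoeffs ([] : List R) = 0 := rfl

@[simp] lemma ofCoeffs_cons (c : R) (l : List R) : ofCoeffs (c :: l) = C c + X * ofCoeffs l := rfl

lemma coeff_ofCoeffs (l : List R) (k : ℕ) : (ofCoeffs l).coeff k = l.getD k 0 := by
  induction l generalizing k with
  | nil => simp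
  | cons c l ih => cases k <;> simp [coeff_C_succ, ih]

lemma eval_ofCoeffs (l : List R) (x : R) : (ofCoeffs l).eval x = evalCoeffs l x := by
  induction l with
  | nil => exact eval_zero
  | cons c l ih => simp [ih, evalCoeffs]

lemma map_ofCoeffs (f : R →+* S) (l : List R) : (ofCoeffs l).map f = ofCoeffs (l.map f) := by
  induction l with
  | nil => exact Polynomial.map_zero f
  | cons c l ih => simp [ih]

lemma map_evalCoeffs (f : R →+* S) (l : List R) (x : R) :
    f (evalCoeffs l x) = evalCoeffs (l.map f) (f x) := by
  rw [← eval_ofCoeffs, ← eval_ofCoeffs, ← map_ofCoeffs, eval_map_apply]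

lemma natDegree_ofCoeffs_le (l : List R) : (ofCoeffs l).natDegree ≤ l.length - 1 := by
  refine natDegree_le_iff_coeff_eq_zero.mpr fun k hk => ?_
  rw [coeff_ofCoeffs, List.getD_eq_default _ _ (by omega)]

lemma monic_ofCoeffs_concat (l : List R) : (ofCoeffs (l ++ [1])).Monic :=
  monic_of_natDegree_le_of_coeff_eq_one l.length
    ((natDegree_ofCoeffs_le _).trans (by simp)) (by simp [coeff_ofCoeffs])

lemma ofCoeffs_mulAddCoeffs (c : R) (f g : List R) :
    ofCoeffs (mulAddCoeffs c f g) = C c * ofCoeffs f + ofCoeffs g := by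
  induction f generalizing g with
  | nil => simp [mulAddCoeffs]
  | cons a f ih =>
    cases g <;> simp only [mulAddCoeffs, ofCoeffs_cons, ofCoeffs_nil, ih, map_add, map_mul] <;> ring

lemma ofCoeffs_mulCoeffs (f g : List R) : ofCoeffs (mulCoeffs f g) = ofCoeffs f * ofCoeffs g := by
  induction f with
  | nil => simp [mulCoeffs]
  | cons c f ih =>
    have hcons : mulCoeffs (c :: f) g = mulAddCoeffs c g (0 :: mulCoeffs f g) := rfl
    rw [hcons, ofCoeffs_mulAddCoeffs, ofCoeffs_cons, ofCoeffs_cons, ih, map_zero]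
    ring

lemma dvd_ofCoeffs_sub_ofCoeffs_modCoeffs (q f : List R) :
    ofCoeffs q ∣ ofCoeffs f - ofCoeffs (modCoeffs q f) := by
  induction f with
  | nil => simp [modCoeffs]
  | cons c f ih =>
    obtain ⟨g, hg⟩ := ih
    have hcons : modCoeffs q (c :: f) = mulAddCoeffs
      (-(c :: modCoeffs q f).getD (q.length - 1) 0) q (c :: modCoeffs q f) := rfl
    refine ⟨X * g + C ((c :: modCoeffs q f).getD (q.length - 1) 0), ?_⟩
    rw [hcons, ofCoeffs_mulAddCoeffs, ofCoeffs_cons, ofCoeffs_cons, map_neg]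
    linear_combination X * hg

lemma ofCoeffs_mem_span_of_dvd_modCoeffs {q f : List R} {m : R}
    (h : ∀ c ∈ modCoeffs q f, m ∣ c) : ofCoeffs f ∈ Ideal.span {ofCoeffs q, C m} := by
  obtain ⟨g, hg⟩ := dvd_ofCoeffs_sub_ofCoeffs_modCoeffs q f
  obtain ⟨r, hr⟩ : C m ∣ ofCoeffs (modCoeffs q f) := by
    generalize modCoeffs q f = l at h
    induction l with
    | nil => simp
    | cons c l ih =>
      rw [List.forall_mem_cons] at h
      exact dvd_add (map_dvd C h.1) ((ih h.2).mul_left X)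
  exact Ideal.mem_span_pair.mpr ⟨g, r, by linear_combination - hg - hr⟩

lemma weightedNorm_ofCoeffs_le {N : RingSeminorm R} (hN : N 1 ≤ 1) (w : ℝ≥0) (l : List R) :
    weightedNorm N w (ofCoeffs l) ≤ evalCoeffs (l.map N) (w : ℝ) := by
  induction l with
  | nil => exact (map_zero _).le
  | cons c l ih =>
    calc weightedNorm N w (C c + X * ofCoeffs l)
        ≤ weightedNorm N w (C c) + weightedNorm N w (X * ofCoeffs l) := map_add_le_add ..
      _ ≤ N c + w * evalCoeffs (l.map N) (w : ℝ) := by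
        rw [weightedNorm_C]
        gcongr
        exact (map_mul_le_mul ..).trans
          (mul_le_mul (weightedNorm_X_le N w hN) ih (apply_nonneg ..) w.2)

lemma evalCoeffs_map_le_evalCoeffs_map {α : Type*} {f g : α → ℝ} (hfg : ∀ a, f a ≤ g a) {x : ℝ}
    (hx : 0 ≤ x) (l : List α) : evalCoeffs (l.map f) x ≤ evalCoeffs (l.map g) x := by
  induction l with
  | nil => rfl
  | cons a l ih => exact add_le_add (hfg a) (mul_le_mul_of_nonneg_left ih hx)

lemma weightedNorm_ofCoeffs_int_le (w : ℕ) (l : List ℤ) :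
    weightedNorm (normRingSeminorm ℤ) w (ofCoeffs l) ≤ evalCoeffs (l.map (|·|)) (w : ℤ) := by
  refine (weightedNorm_ofCoeffs_le (by simp [normRingSeminorm_int]) _ l).trans_eq ?_
  simpa [Function.comp_def, funext normRingSeminorm_int] using
    (map_evalCoeffs (Int.castRingHom ℝ) (l.map (|·|)) w).symm

lemma weightedNorm_weightedNorm_ofCoeffs_le (w : ℕ) (rows : List (List ℤ)) :
    weightedNorm (weightedNorm (normRingSeminorm ℤ) w) w (ofCoeffs (rows.map ofCoeffs)) ≤
      evalCoeffs (rows.map fun row => evalCoeffs (row.map (|·|)) (w : ℤ)) (w : ℤ) := by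
  refine (weightedNorm_ofCoeffs_le ?_ _ _).trans ?_
  · rw [← C_1, weightedNorm_C]; simp [normRingSeminorm_int]
  have hcast := map_evalCoeffs (Int.castRingHom ℝ)
    (rows.map fun row => evalCoeffs (row.map (|·|)) (w : ℤ)) w
  simp only [List.map_map, Int.coe_castRingHom, Int.cast_natCast] at hcast ⊢
  rw [hcast]
  exact evalCoeffs_map_le_evalCoeffs_map (weightedNorm_ofCoeffs_int_le w) w.cast_nonneg rows

end CoefficientLists

lemma derivative_ofCoeffs {R : Type*} [CommRing R] (l : List R) :
    derivative (ofCoeffs l) = ofCoeffs (l.tail.mapIdx fun n c => c * ((n : R) + 1)) := by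
  ext n
  cases h : l[n + 1]? <;> simp [coeff_derivative, coeff_ofCoeffs, List.getD, h]

section Values

open scoped Polynomial.Bivariate

variable {A B : Type*} [CommRing A] [CommRing B]

lemma map_aeval_int (f : A →+* B) (x : A) (p : ℤ[X]) : f (aeval x p) = aeval (f x) p :=
  (aeval_algHom_apply f.toIntAlgHom x p).symm

lemma map_aevalAeval_int (f : A →+* B) (x y : A) (p : ℤ[X][Y]) :
    f (aevalAeval x y p) = aevalAeval (f x) (f y) p := by
  have h : f.toIntAlgHom.comp (aevalAeval x y) = aevalAeval (f x) (f y) :=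
    (aevalAevalEquiv ℤ B).symm.injective (by
      simp [aevalAevalEquiv])
  exact DFunLike.congr_fun h p

lemma aeval_ofCoeffs (l : List ℤ) (x : A) :
    aeval x (ofCoeffs l) = evalCoeffs (l.map (Int.castRingHom A)) x := by
  rw [← eval_ofCoeffs, ← map_ofCoeffs, ← algebraMap_int_eq, eval_map_algebraMap]

lemma aeval_intCast_ofCoeffs (n : ℤ) (l : List ℤ) :
    aeval (n : A) (ofCoeffs l) = (evalCoeffs l n : ℤ) := by
  rw [← eval_ofCoeffs, ← coe_aeval_eq_eval]
  exact (map_aeval_int (Int.castRingHom A) n _).symm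

lemma aevalAeval_intCast_ofCoeffs (m n : ℤ) (t : List (List ℤ)) :
    aevalAeval (m : A) (n : A) (ofCoeffs (t.map ofCoeffs)) =
      (evalCoeffs (t.map fun row => evalCoeffs row m) n : ℤ) := by
  have h : aevalAeval m n (ofCoeffs (t.map ofCoeffs)) =
      evalCoeffs (t.map fun row => evalCoeffs row m) n := by
    rw [coe_aevalAeval_eq_evalEval, evalEval, eval_ofCoeffs, ← coe_evalRingHom, map_evalCoeffs]
    simp [Function.comp_def, eval_ofCoeffs]
  rw [← h]
  exact (map_aevalAeval_int (Int.castRingHom A) m n _).symm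

end Values

section SquareCertificate

open scoped NNReal Polynomial.Bivariate

/-- The polynomial `(Y - X) (P(X, Y)² - d M(X) M(Y))`, whose vanishing at all pairs of roots of `q`
means that `P(x, y)² = d M(x) M(y)` for distinct roots `x` and `y`. -/
noncomputable def squareDefect (d : ℤ) (P : ℤ[X][Y]) (M : ℤ[X]) : ℤ[X][Y] :=
  (Y - C X) * (P ^ 2 - C (C d * M) * M.map C)

variable {d : ℤ} {P : ℤ[X][Y]} {M q : ℤ[X]}

lemma sq_aevalAeval_eq_of_squareDefect_mem (h : squareDefect d P M ∈ Ideal.span {q.map C, C q})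
    {S : Type*} [CommRing S] [IsDomain S] {x y : S} (hxy : x ≠ y) (hx : aeval x q = 0)
    (hy : aeval y q = 0) : aevalAeval x y P ^ 2 = d * aeval x M * aeval y M := by
  have hmapC (f : ℤ[X]) : aevalAeval x y (f.map C) = aeval y f := by
    rw [← Bivariate.swap_C, Bivariate.aevalAeval_swap, aevalAeval_C]
  obtain ⟨g, f, hgf⟩ := Ideal.mem_span_pair.mp h
  have hzero : aevalAeval x y (squareDefect d P M) = 0 := by
    rw [← hgf, map_add, map_mul, map_mul, hmapC, aevalAeval_C, hx, hy]
    ring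
  simp only [squareDefect, map_mul, map_sub, map_pow, hmapC, aevalAeval_C, aevalAeval_Y, aeval_X,
    eq_intCast, map_intCast] at hzero
  exact sub_eq_zero.mp ((mul_eq_zero.mp hzero).resolve_left (sub_ne_zero.mpr hxy.symm))

lemma weightedNorm_squareDefect_le (w : ℝ≥0) {p m : ℝ}
    (hP : weightedNorm (weightedNorm (normRingSeminorm ℤ) w) w P ≤ p)
    (hM : weightedNorm (normRingSeminorm ℤ) w M ≤ m) :
    weightedNorm (weightedNorm (normRingSeminorm ℤ) w) w (squareDefect d P M) ≤
      2 * w * (p ^ 2 + |(d : ℝ)| * m ^ 2) := by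
  set N := weightedNorm (normRingSeminorm ℤ) w
  have hone : normRingSeminorm ℤ 1 ≤ 1 := by simp [normRingSeminorm_int]
  have hm : 0 ≤ m := (apply_nonneg _ _).trans hM
  have hYX : weightedNorm N w (Y - C X) ≤ 2 * w := by
    refine (map_sub_le_add _ _ _).trans ?_
    rw [weightedNorm_C, two_mul]
    exact add_le_add (weightedNorm_X_le N w ((weightedNorm_C _ _ _).trans_le hone))
      (weightedNorm_X_le _ w hone)
  have hdM : weightedNorm N w (C (C d * M)) ≤ |(d : ℝ)| * m := by
    rw [weightedNorm_C]
    refine (map_mul_le_mul ..).trans ?_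
    rw [weightedNorm_C, normRingSeminorm_int, Int.cast_abs]
    gcongr
  have hMC : weightedNorm N w (M.map C) ≤ m := by
    rwa [weightedNorm_map_C]
  rw [squareDefect]
  refine (map_mul_le_mul ..).trans (mul_le_mul hYX ?_ (apply_nonneg ..) (by positivity))
  refine (map_sub_le_add _ _ _).trans (add_le_add ?_ ?_)
  · rw [sq, sq]
    exact (map_mul_le_mul ..).trans (mul_self_le_mul_self (apply_nonneg ..) hP)
  · rw [sq, ← mul_assoc]
    exact (map_mul_le_mul ..).trans (mul_le_mul hdM hMC (apply_nonneg ..) (by positivity))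

/-- The coefficient list of the specialization of `squareDefect` at `X = b`. -/
def squareDefectCoeffs (d : ℤ) (rows : List (List ℤ)) (m : List ℤ) (b : ℤ) : List ℤ :=
  let r := rows.map (evalCoeffs · b)
  let s := mulAddCoeffs (-(d * evalCoeffs m b)) m (mulCoeffs r r)
  mulAddCoeffs (-b) s (0 :: s)

lemma map_squareDefect (rows : List (List ℤ)) (m : List ℤ) (b : ℤ) :
    (squareDefect d (ofCoeffs (rows.map ofCoeffs)) (ofCoeffs m)).map (evalRingHom b) =
      ofCoeffs (squareDefectCoeffs d rows m b) := by
  have hrows : (ofCoeffs (rows.map ofCoeffs)).map (evalRingHom b) =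
      ofCoeffs (rows.map (evalCoeffs · b)) := by
    rw [map_ofCoeffs, List.map_map]
    exact congrArg ofCoeffs (List.map_congr_left fun l _ => eval_ofCoeffs l b)
  simp only [squareDefect, squareDefectCoeffs, ofCoeffs_mulAddCoeffs, ofCoeffs_cons,
    ofCoeffs_mulCoeffs, Polynomial.map_mul, Polynomial.map_sub, Polynomial.map_pow, map_X, map_C,
    hrows, map_C_map_evalRingHom, coe_evalRingHom, eval_X, eval_C, eval_ofCoeffs, map_neg,
    map_mul, map_zero]
  ring

/-- Reduces a relation between all pairs of roots to integer arithmetic on coefficient lists. -/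
theorem sq_aevalAeval_ofCoeffs_eq {q : List ℤ} {rows : List (List ℤ)} {m : List ℤ} {w : ℕ} {b : ℤ}
    (hw : ∀ c ∈ q, |c| + 1 ≤ w)
    (hb : 2 * w * (evalCoeffs (rows.map fun row => evalCoeffs (row.map (|·|)) (w : ℤ)) (w : ℤ) ^ 2 +
      |d| * evalCoeffs (m.map (|·|)) (w : ℤ) ^ 2) + w ≤ b)
    (hdvd : ∀ c ∈ modCoeffs (q ++ [1]) (squareDefectCoeffs d rows m b), evalCoeffs (q ++ [1]) b ∣ c)
    {S : Type*} [CommRing S] [IsDomain S] {x y : S} (hxy : x ≠ y)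
    (hx : aeval x (ofCoeffs (q ++ [1])) = 0) (hy : aeval y (ofCoeffs (q ++ [1])) = 0) :
    aevalAeval x y (ofCoeffs (rows.map ofCoeffs)) ^ 2 =
      d * aeval x (ofCoeffs m) * aeval y (ofCoeffs m) := by
  refine sq_aevalAeval_eq_of_squareDefect_mem ?_ hxy hx hy
  refine mem_span_of_map_eval_mem_span (w := w) (B := b) (monic_ofCoeffs_concat q) ?_ ?_ ?_
  · intro k hk
    have hk' : k < q.length := by simpa using hk.trans_le (natDegree_ofCoeffs_le _)
    rw [normRingSeminorm_int, coeff_ofCoeffs, List.getD_append _ _ _ _ hk',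
      List.getD_eq_getElem _ _ hk', NNReal.coe_natCast]
    exact_mod_cast hw _ (List.getElem_mem hk')
  · refine le_trans ?_ (Int.cast_le.mpr hb)
    push_cast
    exact add_le_add_left (weightedNorm_squareDefect_le (d := d) w
      (weightedNorm_weightedNorm_ofCoeffs_le w rows) (weightedNorm_ofCoeffs_int_le w m)) _
  · rw [map_squareDefect, eval_ofCoeffs]
    exact ofCoeffs_mem_span_of_dvd_modCoeffs hdvd

end SquareCertificate

section PermutationsPreservingSquares

variable {K : Type*} [Field K] [Fintype K]

lemma sum_eval_eq_neg_coeff_card_sub_one {f : K[X]} (hf : f.natDegree ≤ Fintype.card K - 1) :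
    ∑ x, f.eval x = -f.coeff (Fintype.card K - 1) := by
  classical
  have hcard : 0 < Fintype.card K - 1 := Nat.sub_pos_of_lt Fintype.one_lt_card
  have hsum (i : ℕ) (hi : i ∈ Finset.range (Fintype.card K - 1)) :
      f.coeff i * ∑ x : K, x ^ i = 0 := by
    rw [FiniteField.sum_pow_lt_card_sub_one K i (Finset.mem_range.mp hi), mul_zero]
  have htop : ∑ x : K, x ^ (Fintype.card K - 1) = -1 := by
    have hpow (x : K) : x ^ (Fintype.card K - 1) = 1 - if x = 0 then 1 else 0 := by
      split_ifs with hx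
      · rw [hx, zero_pow hcard.ne', sub_self]
      · rw [FiniteField.pow_card_sub_one_eq_one x hx, sub_zero]
    simp [hpow]
  simp only [eval_eq_sum_range' (Nat.lt_succ_of_le hf)]
  rw [Finset.sum_comm]
  simp only [← Finset.mul_sum]
  rw [Finset.sum_range_succ, Finset.sum_eq_zero hsum, htop, zero_add, mul_neg_one]

lemma choose_mul_sum_eq_zero_of_injective {f : K → K} {S : Finset K}
    (hS : ∀ c ∈ S, Function.Injective fun x => f x - c * x) {k : ℕ} (hkS : k ≤ S.card)
    (hk : k < Fintype.card K - 1) (i : ℕ) :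
    (k.choose i : K) * ∑ x, x ^ i * f x ^ (k - i) = 0 := by
  set P : K[X] := ∑ x, (C (-x) * X + C (f x)) ^ k
  have hcoeff (i : ℕ) : P.coeff i = (-1) ^ i * (k.choose i * ∑ x, x ^ i * f x ^ (k - i)) := by
    simp only [P, finsetSum_coeff, Finset.mul_sum]
    refine Finset.sum_congr rfl fun x _ => ?_
    have hcomp : (C (-x) * X + C (f x)) ^ k = ((X + C (f x)) ^ k).comp (C (-x) * X) := by simp
    rw [hcomp, comp_C_mul_X_coeff, coeff_X_add_C_pow, neg_pow]
    ring
  have hdeg : P.degree < S.card := by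
    refine (degree_lt_iff_coeff_zero _ _).mpr fun j hj => ?_
    rw [hcoeff]
    rcases (hkS.trans hj).eq_or_lt with rfl | hlt
    · simp [FiniteField.sum_pow_lt_card_sub_one K k hk]
    · simp [Nat.choose_eq_zero_of_lt hlt]
  have hroot (c : K) (hc : c ∈ S) : P.eval c = 0 := by
    have hbij := (hS c hc).bijective_of_finite
    calc P.eval c = ∑ x, (f x - c * x) ^ k := by
          simp only [P, eval_finsetSum, eval_pow, eval_add, eval_mul, eval_C, eval_X]
          exact Finset.sum_congr rfl fun x _ => by ring
      _ = ∑ y : K, y ^ k := hbij.sum_comp (· ^ k)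
      _ = 0 := FiniteField.sum_pow_lt_card_sub_one K k hk
  have hP := eq_zero_of_degree_lt_of_eval_finset_eq_zero S hdeg hroot
  have := hcoeff i
  rw [hP, coeff_zero] at this
  exact (mul_eq_zero.mp this.symm).resolve_left (pow_ne_zero _ (neg_ne_zero.mpr one_ne_zero))

lemma natDegree_le_one_of_sum_pow_mul_pow_eq_zero {F : K[X]}
    (hF : F.natDegree ≤ Fintype.card K - 1)
    (hsum : ∀ i j : ℕ, 2 * (i + j) ≤ Fintype.card K + 1 →
      ∑ x, x ^ i * F.eval x ^ j = 0) : F.natDegree ≤ 1 := by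
  by_contra! hd
  set d := F.natDegree
  set b := (Fintype.card K - 1) % d
  set a := (Fintype.card K - 1) / d
  have hab : a * d + b = Fintype.card K - 1 := Nat.div_add_mod' _ _
  have ha : 1 ≤ a := (Nat.one_le_div_iff (by omega)).mpr hF
  have hb : b < d := Nat.mod_lt _ (by omega)
  have hsmall : 2 * (b + a) ≤ Fintype.card K + 1 := by
    obtain ⟨e, he⟩ := Nat.exists_eq_add_of_le hd
    have : e ≤ a * e := Nat.le_mul_of_pos_left e ha
    rw [he] at hab
    have hab' : a * e + 2 * a + b = Fintype.card K - 1 := by rw [← hab]; ring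
    omega
  have hF0 : F ≠ 0 := by rintro h; simp [d, h] at hd
  have hdeg : (X ^ b * F ^ a).natDegree = Fintype.card K - 1 := by
    rw [natDegree_mul (pow_ne_zero _ X_ne_zero) (pow_ne_zero _ hF0), natDegree_X_pow,
      natDegree_pow, add_comm, hab]
  have hlead := sum_eval_eq_neg_coeff_card_sub_one hdeg.le
  simp only [eval_mul, eval_pow, eval_X] at hlead
  rw [hsum b a hsmall, ← hdeg, coeff_natDegree, eq_comm, neg_eq_zero, leadingCoeff_eq_zero] at hlead
  exact mul_ne_zero (pow_ne_zero _ X_ne_zero) (pow_ne_zero _ hF0) hlead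

lemma card_le_two_mul_card_quadraticChar_ne_one [DecidableEq K] (hK : ringChar K ≠ 2) :
    Fintype.card K ≤ 2 * (Finset.univ.filter fun c : K => quadraticChar K c ≠ 1).card := by
  have hle (c : K) : 1 - quadraticChar K c ≤ if quadraticChar K c ≠ 1 then 2 else 0 := by
    obtain rfl | hc := eq_or_ne c 0
    · simp
    · rcases quadraticChar_dichotomy hc with h | h <;> simp [h]
  have hsum := Finset.sum_le_sum fun c (_ : c ∈ Finset.univ) => hle c
  rw [Finset.sum_sub_distrib, quadraticChar_sum_zero hK, ← Finset.sum_filter] at hsum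
  simp only [Finset.sum_const, nsmul_eq_mul, Finset.card_univ] at hsum
  omega

lemma injective_sub_mul_of_quadraticChar_sub [DecidableEq K] {f : K → K}
    (hf : ∀ a b, quadraticChar K (f a - f b) = quadraticChar K (a - b)) {c : K}
    (hc : quadraticChar K c ≠ 1) : Function.Injective fun x => f x - c * x := by
  intro a b hab
  by_contra hne
  have hdir : f a - f b = c * (a - b) := by linear_combination hab
  have hχ := hf a b
  rw [hdir, map_mul] at hχ
  exact hc (mul_right_cancel₀ (quadraticChar_eq_zero_iff.not.mpr (sub_ne_zero.mpr hne))
    (hχ.trans (one_mul _).symm))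

end PermutationsPreservingSquares

/-- Carlitz's theorem: the slopes of `f` are all squares, so `f x - c x` is a permutation for more
than half of all `c`, which makes the low-degree power sums of `f` vanish. -/
theorem eq_id_of_quadraticChar_sub {p : ℕ} [Fact p.Prime] (hp : 3 < p) {f : ZMod p → ZMod p}
    (hf : ∀ a b, quadraticChar (ZMod p) (f a - f b) = quadraticChar (ZMod p) (a - b))
    (hf0 : f 0 = 0) (hf1 : f 1 = 1) : f = id := by
  have hodd : p % 2 = 1 := (Fact.out : p.Prime).eq_two_or_odd.resolve_left (by omega)
  have hhalf := card_le_two_mul_card_quadraticChar_ne_one (K := ZMod p)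
    (by rw [ZMod.ringChar_zmod_n]; omega)
  set S := Finset.univ.filter fun c : ZMod p => quadraticChar (ZMod p) c ≠ 1
  set F := Lagrange.interpolate Finset.univ id f
  have hF (x : ZMod p) : F.eval x = f x :=
    Lagrange.eval_interpolate_at_node f Function.injective_id.injOn (Finset.mem_univ x)
  have hdeg : F.degree < Fintype.card (ZMod p) :=
    Lagrange.degree_interpolate_lt f Function.injective_id.injOn
  have hdeg1 : F.natDegree ≤ 1 := by
    refine natDegree_le_one_of_sum_pow_mul_pow_eq_zero ?_ fun i j hij => ?_
    · exact natDegree_le_iff_coeff_eq_zero.mpr fun k hk =>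
        (degree_lt_iff_coeff_zero _ _).mp hdeg k (Nat.le_of_pred_lt hk)
    rw [ZMod.card] at hij hhalf
    have hmoment := choose_mul_sum_eq_zero_of_injective (S := S) (k := i + j)
      (fun c hc => injective_sub_mul_of_quadraticChar_sub hf (Finset.mem_filter.mp hc).2)
      (by omega) (by rw [ZMod.card]; omega) i
    have hchoose : ((i + j).choose i : ZMod p) ≠ 0 := by
      rw [Ne, ZMod.natCast_eq_zero_iff, ← Nat.Prime.coprime_iff_not_dvd Fact.out]
      exact Nat.Prime.coprime_choose_of_lt Fact.out (by omega) (Nat.le_add_right i j)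
    simpa [hF] using (mul_eq_zero.mp hmoment).resolve_left hchoose
  obtain ⟨a, b, hab⟩ := exists_eq_X_add_C_of_natDegree_le_one hdeg1
  simp only [← hF, hab] at hf0 hf1
  funext x
  rw [← hF, hab]
  simp_all

section ProjectiveLine

open scoped OnePoint

variable {K : Type*} [Field K]

/-- The homogeneous coordinates of a point of the projective line that are normalized as
`(x : 1)` or `(1 : 0)`. -/
def homogeneousCoords (x : OnePoint K) : Fin 2 → K := x.elim ![1, 0] fun t => ![t, 1]

/-- The determinant of the normalized homogeneous coordinates of two points. -/
def bracket (x y : OnePoint K) : K := (of ![homogeneousCoords x, homogeneousCoords y]).det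

lemma bracket_apply (x y : OnePoint K) :
    bracket x y = homogeneousCoords x 0 * homogeneousCoords y 1 -
      homogeneousCoords x 1 * homogeneousCoords y 0 := by
  simp [bracket, det_fin_two, mul_comm]

lemma homogeneousCoords_ne_zero (x : OnePoint K) : homogeneousCoords x ≠ 0 := by
  cases x with
  | infty => exact fun h => one_ne_zero (congrFun h 0)
  | coe t => exact fun h => one_ne_zero (congrFun h 1)

lemma bracket_eq_zero_iff {x y : OnePoint K} : bracket x y = 0 ↔ x = y := by
  rw [bracket_apply]
  cases x <;> cases y <;> simp [homogeneousCoords, sub_eq_zero]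

lemma eq_of_homogeneousCoords_eq_smul {x y : OnePoint K} {c : K}
    (h : homogeneousCoords x = c • homogeneousCoords y) : x = y := by
  rw [← bracket_eq_zero_iff, bracket_apply, h]
  simp only [Pi.smul_apply, smul_eq_mul]
  ring

variable [DecidableEq K]

lemma exists_mulVec_homogeneousCoords (g : GL (Fin 2) K) (x : OnePoint K) :
    ∃ c : K, c ≠ 0 ∧ g.1 *ᵥ homogeneousCoords x = c • homogeneousCoords (g • x) := by
  have hg : g.1 *ᵥ homogeneousCoords x ≠ 0 := fun h =>
    homogeneousCoords_ne_zero x (eq_zero_of_mulVec_eq_zero g.det_ne_zero h)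
  have hx : g.1 *ᵥ homogeneousCoords x = ![g 0 0 * homogeneousCoords x 0 +
      g 0 1 * homogeneousCoords x 1, g 1 0 * homogeneousCoords x 0 +
      g 1 1 * homogeneousCoords x 1] := by
    ext i; fin_cases i <;> simp [mulVec, dotProduct, Fin.sum_univ_two]
  rw [hx] at hg ⊢
  cases x with
  | infty =>
    rw [OnePoint.smul_infty_eq_ite]
    by_cases h : g 1 0 = 0
    · exact ⟨g 0 0, by simpa [homogeneousCoords, h] using hg, by simp [homogeneousCoords, h]⟩
    · exact ⟨g 1 0, h, by simp [homogeneousCoords, h, mul_div_cancel₀]⟩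
  | coe t =>
    rw [OnePoint.smul_some_eq_ite]
    by_cases h : g 1 0 * t + g 1 1 = 0
    · exact ⟨g 0 0 * t + g 0 1, by simpa [homogeneousCoords, h] using hg,
        by simp [homogeneousCoords, h]⟩
    · exact ⟨g 1 0 * t + g 1 1, h, by simp [homogeneousCoords, h, mul_div_cancel₀]⟩

lemma smul_eq_of_mulVec {g : GL (Fin 2) K} {x y : OnePoint K} {c : K}
    (h : g.1 *ᵥ homogeneousCoords x = c • homogeneousCoords y) : g • x = y := by
  obtain ⟨b, hb, hgx⟩ := exists_mulVec_homogeneousCoords g x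
  refine eq_of_homogeneousCoords_eq_smul (c := b⁻¹ * c) ?_
  rw [mul_smul, ← h, hgx, inv_smul_smul₀ hb]

lemma exists_det_mul_bracket (g : GL (Fin 2) K) : ∃ c : OnePoint K → K, (∀ x, c x ≠ 0) ∧
    ∀ x y, g.1.det * bracket x y = c x * c y * bracket (g • x) (g • y) := by
  choose c hc hg using exists_mulVec_homogeneousCoords g
  have hcoord : ∀ x i, g i 0 * homogeneousCoords x 0 + g i 1 * homogeneousCoords x 1 =
      c x * homogeneousCoords (g • x) i := fun x i => by
    simpa [mulVec, dotProduct, Fin.sum_univ_two] using congrFun (hg x) i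
  refine ⟨c, hc, fun x y => ?_⟩
  calc g.1.det * bracket x y
      = (c x * homogeneousCoords (g • x) 0) * (c y * homogeneousCoords (g • y) 1) -
          (c x * homogeneousCoords (g • x) 1) * (c y * homogeneousCoords (g • y) 0) := by
        simp only [← hcoord, det_fin_two, bracket_apply]; ring
    _ = c x * c y * bracket (g • x) (g • y) := by rw [bracket_apply]; ring

lemma exists_smul_infty_eq_smul_zero_eq {x y : OnePoint K} (hxy : x ≠ y) :
    ∃ g : GL (Fin 2) K, g • (∞ : OnePoint K) = x ∧ g • ((0 : K) : OnePoint K) = y := by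
  have hdet : (of ![homogeneousCoords x, homogeneousCoords y])ᵀ.det ≠ 0 := by
    rw [det_transpose]
    exact bracket_eq_zero_iff.not.mpr hxy
  refine ⟨.mkOfDetNeZero _ hdet, smul_eq_of_mulVec (c := 1) ?_, smul_eq_of_mulVec (c := 1) ?_⟩ <;>
  · ext i
    simp [GeneralLinearGroup.mkOfDetNeZero, mulVec, dotProduct, homogeneousCoords]

lemma exists_smul_eq_of_ne {x y z : OnePoint K} (hxy : x ≠ y) (hyz : y ≠ z) (hzx : z ≠ x) :
    ∃ g : GL (Fin 2) K, g • (∞ : OnePoint K) = x ∧ g • ((0 : K) : OnePoint K) = y ∧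
      g • ((1 : K) : OnePoint K) = z := by
  let A : Matrix (Fin 2) (Fin 2) K :=
    (of ![bracket z y • homogeneousCoords x, bracket x z • homogeneousCoords y])ᵀ
  have hA : A.det = bracket z y * bracket x z * bracket x y := by
    simp [A, det_fin_two, bracket_apply]; ring
  have hA0 : A.det ≠ 0 := by
    simp [hA, bracket_eq_zero_iff, hxy, hyz.symm, hzx.symm]
  refine ⟨.mkOfDetNeZero A hA0, smul_eq_of_mulVec (c := bracket z y) ?_,
    smul_eq_of_mulVec (c := bracket x z) ?_, smul_eq_of_mulVec (c := bracket x y) ?_⟩ <;>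
  · ext i
    fin_cases i <;>
      simp [A, GeneralLinearGroup.mkOfDetNeZero, mulVec, dotProduct, homogeneousCoords,
        bracket_apply] <;> ring

lemma mem_center_iff_smul_eq {g : GL (Fin 2) K} :
    g ∈ Subgroup.center (GL (Fin 2) K) ↔ ∀ x : OnePoint K, g • x = x := by
  rw [GeneralLinearGroup.mem_center_iff_val_mem_range_scalar]
  constructor
  · rintro ⟨c, hc⟩ x
    exact smul_eq_of_mulVec (c := c) (by rw [← hc]; ext i; fin_cases i <;> simp [scalar_apply])
  · intro h
    have h10 : g 1 0 = 0 := OnePoint.smul_infty_eq_self_iff.mp (h ∞)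
    have h01 : g 0 1 = 0 := by
      have := GeneralLinearGroup.fixpointPolynomial_aeval_eq_zero_iff.mpr (h (0 : K))
      simpa [GeneralLinearGroup.fixpointPolynomial] using this
    have h11 : g 1 1 = g 0 0 := by
      have := GeneralLinearGroup.fixpointPolynomial_aeval_eq_zero_iff.mpr (h (1 : K))
      simpa [GeneralLinearGroup.fixpointPolynomial, h10, h01, sub_eq_zero] using this
    refine ⟨g 0 0, ?_⟩
    ext i j
    fin_cases i <;> fin_cases j <;> simp [scalar_apply, h10, h01, h11]

end ProjectiveLine

section GenerationByParabolics

open Matrix.GeneralLinearGroup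
open scoped OnePoint

lemma mem_of_det_eq_one_of_transvection_mem {K : Type*} [Field K] {H : Subgroup (GL (Fin 2) K)}
    (hH : ∀ {i j : Fin 2} (hij : i ≠ j) (b : K),
      SpecialLinearGroup.toGL (SpecialLinearGroup.transvection hij b) ∈ H)
    {A : GL (Fin 2) K} (hA : A.1.det = 1) : A ∈ H := by
  have hSL (B : SpecialLinearGroup (Fin 2) K) : SpecialLinearGroup.toGL B ∈ H := by
    induction B using SL2.transvection_induction with
    | htransvec i j hij b => exact hH hij b
    | hmul B C hB hC => simpa using H.mul_mem hB hC
  convert hSL ⟨A.1, hA⟩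
  exact Units.ext rfl

variable {p : ℕ} [Fact p.Prime] {H : Subgroup (GL (Fin 2) (ZMod p))}

lemma upperRightHom_mem_of_smul_eq_self_iff (hc : Subgroup.center _ ≤ H)
    {g : GL (Fin 2) (ZMod p)} (hg : g ∈ H) (hfix : ∀ x : OnePoint (ZMod p), g • x = x ↔ x = ∞)
    (b : ZMod p) : upperRightHom b ∈ H := by
  have h10 : g 1 0 = 0 := OnePoint.smul_infty_eq_self_iff.mp ((hfix ∞).mpr rfl)
  have hfin (t : ZMod p) : (g 1 1 - g 0 0) * t ≠ g 0 1 := fun h =>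
    OnePoint.coe_ne_infty t <| (hfix t).mp <| fixpointPolynomial_aeval_eq_zero_iff.mp <| by
      simp [fixpointPolynomial, h10, h]
  have h11 : g 1 1 = g 0 0 := by
    by_contra h
    exact hfin _ (mul_div_cancel₀ _ (sub_ne_zero.mpr h))
  have h01 : g 0 1 ≠ 0 := by simpa using (hfin 0).symm
  have h00 : g 0 0 ≠ 0 := fun h => g.det_ne_zero (by simp [det_fin_two, h10, h])
  have hscalar : scalar (Fin 2) (Units.mk0 _ h00) ∈ H :=
    hc (by rw [center_eq_range_scalar]; exact ⟨_, rfl⟩)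
  have hg_eq : g = scalar (Fin 2) (Units.mk0 _ h00) * upperRightHom (g 0 1 / g 0 0) := by
    ext i j
    fin_cases i <;> fin_cases j <;> simp [h10, h11, h00, mul_div_cancel₀]
  have hmem : upperRightHom (g 0 1 / g 0 0) ∈ H :=
    (H.mul_mem_cancel_left hscalar).mp (hg_eq ▸ hg)
  have hb : b = (b / (g 0 1 / g 0 0)).val • (g 0 1 / g 0 0) := by
    rw [nsmul_eq_mul, ZMod.natCast_zmod_val, div_mul_cancel₀ _ (div_ne_zero h01 h00)]
  rw [hb, AddChar.map_nsmul_eq_pow]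
  exact H.pow_mem hmem _

lemma conj_upperRightHom_mem (hc : Subgroup.center _ ≤ H) {g : GL (Fin 2) (ZMod p)} (hg : g ∈ H)
    {k : GL (Fin 2) (ZMod p)} (hfix : ∀ x : OnePoint (ZMod p), g • x = x ↔ x = k • ∞)
    (b : ZMod p) : k * upperRightHom b * k⁻¹ ∈ H := by
  have hcomap : Subgroup.center _ ≤ H.comap (MulAut.conj k).toMonoidHom := fun z hz => by
    have hconj : k * z * k⁻¹ = z := by rw [Subgroup.mem_center_iff.mp hz, mul_inv_cancel_right]
    simpa [hconj] using hc hz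
  refine upperRightHom_mem_of_smul_eq_self_iff (g := k⁻¹ * g * k) hcomap
    (by simpa [mul_assoc] using hg) (fun x => ?_) b
  rw [mul_assoc, mul_smul, inv_smul_eq_iff, mul_smul, hfix, smul_left_cancel_iff]

lemma mem_of_det_eq_one (hc : Subgroup.center _ ≤ H) {g h : GL (Fin 2) (ZMod p)} (hg : g ∈ H)
    (hh : h ∈ H) {x : OnePoint (ZMod p)} (hfix : ∀ y, g • y = y ↔ y = x) (hx : h • x ≠ x)
    {A : GL (Fin 2) (ZMod p)} (hA : A.1.det = 1) : A ∈ H := by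
  obtain ⟨k, hkInfty, hk0⟩ := exists_smul_infty_eq_smul_zero_eq hx.symm
  have hfix' (y : OnePoint (ZMod p)) : (h * g * h⁻¹) • y = y ↔ y = h • x := by
    rw [mul_smul, mul_smul, ← eq_inv_smul_iff, hfix, inv_smul_eq_iff]
  let w : GL (Fin 2) (ZMod p) := .mkOfDetNeZero !![0, 1; 1, 0] (by simp [det_fin_two])
  have hw : w • (∞ : OnePoint (ZMod p)) = ((0 : ZMod p) : OnePoint (ZMod p)) := by
    simp [w, GeneralLinearGroup.mkOfDetNeZero, OnePoint.smul_infty_eq_ite]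
  have hupper (b : ZMod p) : k * upperRightHom b * k⁻¹ ∈ H :=
    conj_upperRightHom_mem hc hg (by simpa [hkInfty] using hfix) b
  have hlower (b : ZMod p) : k * (w * upperRightHom b * w⁻¹) * k⁻¹ ∈ H := by
    have := conj_upperRightHom_mem (k := k * w) hc (H.mul_mem (H.mul_mem hh hg) (H.inv_mem hh))
      (by simpa [mul_smul, hw, hk0] using hfix') b
    simpa [mul_assoc] using this
  have htransvection {i j : Fin 2} (hij : i ≠ j) (b : ZMod p) :
      SpecialLinearGroup.toGL (SpecialLinearGroup.transvection hij b) ∈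
        H.comap (MulAut.conj k).toMonoidHom := by
    fin_cases i <;> fin_cases j
    · exact absurd rfl hij
    · have htoGL : SpecialLinearGroup.toGL (.transvection hij b) = upperRightHom b := by
        ext i j
        fin_cases i <;> fin_cases j <;> simp [SpecialLinearGroup.transvection_coe]
      exact Subgroup.mem_comap.mpr (htoGL ▸ hupper b)
    · have htoGL : SpecialLinearGroup.toGL (.transvection hij b) = w * upperRightHom b * w⁻¹ := by
        rw [eq_mul_inv_iff_mul_eq]
        ext i j
        fin_cases i <;> fin_cases j <;>
          simp [w, mkOfDetNeZero, SpecialLinearGroup.transvection_coe, Matrix.mul_apply,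
            Fin.sum_univ_two]
      exact Subgroup.mem_comap.mpr (htoGL ▸ hlower b)
    · exact absurd rfl hij
  have hdet : (k⁻¹ * A * k).1.det = 1 := by
    simpa [hA] using inv_mul_cancel₀ k.det_ne_zero
  simpa [mul_assoc] using mem_of_det_eq_one_of_transvection_mem htransvection hdet

lemma eq_top_of_quadraticChar_det_eq_neg_one (hc : Subgroup.center _ ≤ H)
    (hSL : ∀ A : GL (Fin 2) (ZMod p), A.1.det = 1 → A ∈ H) {s : GL (Fin 2) (ZMod p)} (hs : s ∈ H)
    (hdet : quadraticChar (ZMod p) s.1.det = -1) : H = ⊤ := by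
  have hsquare (A : GL (Fin 2) (ZMod p)) (hA : quadraticChar (ZMod p) A.1.det = 1) : A ∈ H := by
    obtain ⟨c, hcA⟩ := (quadraticChar_one_iff_isSquare A.det_ne_zero).mp hA
    have hc0 : c ≠ 0 := by rintro rfl; exact A.det_ne_zero (by simpa using hcA)
    have hscalar : scalar (Fin 2) (Units.mk0 c hc0) ∈ H :=
      hc (by rw [center_eq_range_scalar]; exact ⟨_, rfl⟩)
    refine (H.mul_mem_cancel_left (H.inv_mem hscalar)).mp (hSL _ ?_)
    simp [hcA, hc0, ← map_inv, ← sq]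
  rw [eq_top_iff]
  intro A _
  rcases quadraticChar_dichotomy A.det_ne_zero with hA | hA
  · exact hsquare A hA
  · exact (H.mul_mem_cancel_left hs).mp (hsquare _ (by simp [-quadraticChar_apply, hdet, hA]))

end GenerationByParabolics

section PaleyTwoGraph

open Matrix.GeneralLinearGroup
open scoped OnePoint

/-- The sign attached to an ordered triple of points of the projective line over a finite field: it
vanishes exactly when two of them coincide. When `-1` is a square it does not depend on the order
and describes the Paley two-graph. -/
def paleySign {F : Type*} [Field F] [Fintype F] [DecidableEq F] (x y z : OnePoint F) : ℤ :=
  quadraticChar F (bracket x y * bracket y z * bracket z x)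

section FiniteField

variable {F : Type*} [Field F] [Fintype F] [DecidableEq F]

lemma paleySign_ne_zero_iff {x y z : OnePoint F} :
    paleySign x y z ≠ 0 ↔ x ≠ y ∧ y ≠ z ∧ z ≠ x := by
  simp [paleySign, -quadraticChar_apply, quadraticChar_eq_zero_iff, bracket_eq_zero_iff, not_or,
    and_assoc]

lemma paleySign_smul (g : GL (Fin 2) F) (x y z : OnePoint F) :
    paleySign (g • x) (g • y) (g • z) = quadraticChar F g.1.det * paleySign x y z := by
  obtain ⟨c, hc, hg⟩ := exists_det_mul_bracket g
  have hsquare : g.1.det ^ 2 * (g.1.det * (bracket x y * bracket y z * bracket z x)) =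
      (c x * c y * c z) ^ 2 *
        (bracket (g • x) (g • y) * bracket (g • y) (g • z) * bracket (g • z) (g • x)) := by
    linear_combination (g.1.det * bracket y z) * (g.1.det * bracket z x) * hg x y +
      (c x * c y * bracket (g • x) (g • y)) * (g.1.det * bracket z x) * hg y z +
      (c x * c y * bracket (g • x) (g • y)) * (c y * c z * bracket (g • y) (g • z)) * hg z x
  have hchar := congrArg (quadraticChar F) hsquare
  rw [map_mul, map_mul _ (_ ^ 2), quadraticChar_sq_one' g.det_ne_zero,
    quadraticChar_sq_one' (mul_ne_zero (mul_ne_zero (hc x) (hc y)) (hc z)), one_mul, one_mul,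
    map_mul] at hchar
  exact hchar.symm

lemma paleySign_infty_coe_coe (a b : F) :
    paleySign (∞ : OnePoint F) (a : OnePoint F) (b : OnePoint F) =
      quadraticChar F (-1) * quadraticChar F (a - b) := by
  rw [paleySign, ← map_mul]
  congr 1
  simp [bracket_apply, homogeneousCoords]

end FiniteField

variable {p : ℕ} [Fact p.Prime]

lemma eq_id_of_paleySign (hp : 3 < p) {f : Equiv.Perm (OnePoint (ZMod p))} {s : ℤ}
    (hf : ∀ x y z, paleySign (f x) (f y) (f z) = s * paleySign x y z) (hInfty : f ∞ = ∞)
    (hZero : f (0 : ZMod p) = (0 : ZMod p)) (hOne : f (1 : ZMod p) = (1 : ZMod p))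
    (x : OnePoint (ZMod p)) : f x = x := by
  have hs : s = 1 := by
    have h := hf ∞ (0 : ZMod p) (1 : ZMod p)
    rw [hInfty, hZero, hOne, eq_comm, mul_eq_right₀ (paleySign_ne_zero_iff.mpr (by simp))] at h
    exact h
  have hfinite (a : ZMod p) : ∃ b : ZMod p, f a = b := by
    obtain ⟨b, hb⟩ := OnePoint.ne_infty_iff_exists.mp fun h : f a = ∞ =>
      OnePoint.coe_ne_infty a (f.injective (h.trans hInfty.symm))
    exact ⟨b, hb.symm⟩
  choose f' hf' using hfinite
  have hχ (a b : ZMod p) :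
      quadraticChar (ZMod p) (f' a - f' b) = quadraticChar (ZMod p) (a - b) := by
    have h := hf ∞ a b
    rw [hInfty, hf', hf', paleySign_infty_coe_coe, paleySign_infty_coe_coe, hs, one_mul] at h
    exact mul_left_cancel₀ (quadraticChar_eq_zero_iff.not.mpr (by simp)) h
  have hid : f' = id := eq_id_of_quadraticChar_sub hp hχ
    (OnePoint.coe_injective ((hf' 0).symm.trans hZero))
    (OnePoint.coe_injective ((hf' 1).symm.trans hOne))
  cases x with
  | infty => exact hInfty
  | coe a => rw [hf', hid, id]

theorem exists_eq_smul_of_paleySign (hp : 3 < p) {f : Equiv.Perm (OnePoint (ZMod p))} {s : ℤ}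
    (hf : ∀ x y z, paleySign (f x) (f y) (f z) = s * paleySign x y z) :
    ∃ g : GL (Fin 2) (ZMod p), quadraticChar (ZMod p) g.1.det = s ∧ ∀ x, f x = g • x := by
  obtain ⟨g, hInfty, hZero, hOne⟩ := exists_smul_eq_of_ne (x := f ∞) (y := f (0 : ZMod p))
    (z := f (1 : ZMod p)) (by simp) (by simp) (by simp)
  have hg (x : OnePoint (ZMod p)) : f x = g • x := by
    have h := eq_id_of_paleySign hp (f := f.trans (MulAction.toPerm g⁻¹))
      (s := quadraticChar (ZMod p) (g⁻¹).1.det * s)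
      (by intro x y z; simp [-quadraticChar_apply, -coe_units_inv, paleySign_smul, hf, mul_assoc])
      (by simp [← hInfty]) (by simp [← hZero]) (by simp [← hOne]) x
    rwa [Equiv.trans_apply, MulAction.toPerm_apply, inv_smul_eq_iff] at h
  have hne : paleySign ∞ ((0 : ZMod p) : OnePoint (ZMod p)) (1 : ZMod p) ≠ 0 :=
    paleySign_ne_zero_iff.mpr (by simp)
  exact ⟨g, mul_right_cancel₀ hne (by rw [← hf, hg, hg, hg, paleySign_smul]), hg⟩

theorem nonempty_mulEquiv_of_paleySign (hp : 3 < p) {G : Type*} [Group G]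
    {φ : G →* Equiv.Perm (OnePoint (ZMod p))} (hφ : Function.Injective φ) {s : G → ℤ}
    (hs : ∀ g x y z, paleySign (φ g x) (φ g y) (φ g z) = s g * paleySign x y z)
    {u h t : G} {x₀ : OnePoint (ZMod p)} (hu : ∀ x, φ u x = x ↔ x = x₀) (hh : φ h x₀ ≠ x₀)
    (ht : s t = -1) :
    Nonempty (G ≃* GL (Fin 2) (ZMod p) ⧸ Subgroup.center (GL (Fin 2) (ZMod p))) := by
  let T := MulAction.toPermHom (GL (Fin 2) (ZMod p)) (OnePoint (ZMod p))
  have hker : T.ker = Subgroup.center _ := by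
    ext g
    rw [mem_center_iff_smul_eq, MonoidHom.mem_ker, Equiv.Perm.ext_iff]
    rfl
  have hlift (a : G) : ∃ g, quadraticChar (ZMod p) g.1.det = s a ∧ T g = φ a := by
    obtain ⟨g, hdet, hg⟩ := exists_eq_smul_of_paleySign hp (hs a)
    exact ⟨g, hdet, Equiv.ext fun x => (hg x).symm⟩
  let H := φ.range.comap T
  have hc : Subgroup.center _ ≤ H := hker ▸ T.ker_le_comap _
  have hmem {g : GL (Fin 2) (ZMod p)} {a : G} (hg : T g = φ a) : g ∈ H := ⟨a, hg.symm⟩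
  obtain ⟨gu, -, hgu⟩ := hlift u
  obtain ⟨gh, -, hgh⟩ := hlift h
  obtain ⟨gt, hdet, hgt⟩ := hlift t
  have hsmul {g : GL (Fin 2) (ZMod p)} {a : G} (hg : T g = φ a) (x) : g • x = φ a x := by
    rw [← hg]; rfl
  have hH : H = ⊤ := eq_top_of_quadraticChar_det_eq_neg_one hc
    (fun _ => mem_of_det_eq_one hc (hmem hgu) (hmem hgh) (fun y => by rw [hsmul hgu, hu])
      (by rwa [hsmul hgh])) (hmem hgt) (hdet.trans ht)
  have hrange : φ.range = T.range := by
    apply le_antisymm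
    · rintro _ ⟨a, rfl⟩
      obtain ⟨g, -, hg⟩ := hlift a
      exact ⟨g, hg⟩
    · rintro _ ⟨g, rfl⟩
      exact (hH ▸ Subgroup.mem_top g : g ∈ H)
  exact ⟨(MonoidHom.ofInjective hφ).trans <| (MulEquiv.subgroupCongr hrange).trans <|
    (QuotientGroup.quotientKerEquivRange T).symm.trans <|
      QuotientGroup.quotientMulEquivOfEq hker⟩

end PaleyTwoGraph

section Certificate

open scoped Polynomial.Bivariate

/-- The coefficients of `Q` below the leading one. -/
def lowCoeffsQ : List ℤ :=
  [-261910751, 2363203645, 2573924261, -2555610007, 4054490087, -1463296732, -7068248851,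
   17713731976, -27316581262, 35730188833, -40888329774, 40034881756, -33394267804, 23992472995,
   -15020495335, 8240756348, -3929042061, 1602112888, -545068137, 149069425, -30157709, 3161522,
   599981, -437871, 142158, -33002, 6003, -899, 116, -13]

/-- The coefficients of `M`, where `R(x, y)² = 29 M(x) M(y)` for distinct roots `x` and `y` of
`Q` and `R` is the form with the symmetric coefficient table `pairTable`. -/
def pointCoeffs : List ℤ :=
  [-327262658951747328260943182034409, 2939355715840230177192486979453495,
   3348434875974888335433150766424092, -3154797619625514231954773537904164,
   4842698042884655556220560736583720, -1506471775646099817899153957401763,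
   -9077506864307381983550542253996846, 21842403625633316591972180423239331,
   -32943889626870706330430873488122451, 42506141840282839504968411230010935,
   -48097273991522721258392884582893263, 46398041939009302865190751654756613,
   -37911251074526116379770161661434460, 26523172633718817385724440117300532,
   -16066811079988577601419777747433911, 8457910923665659971492943559180673,
   -3811045624965883950381448847952787, 1426384004525769964664763837530699,
   -419070977382540265062628308729410, 84438572749095749586299802850779,
   -4828990205833335395642392935835, -4417107661260816763330366559600,
   2218272419187252505508053547413, -609722785200008216925626298028, 106736513047575384127511749792,
   -8184936413395048108082370260, -1619625347232052137382224542, 685688250858910462583276201,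
   -115329225131850183945914438, 8863635344935131658234106]

/-- The part of `pairTable` on and below the diagonal, with the diagonal entries halved. -/
def halfPairTable : List (List ℤ) :=
  [[-406706569292649640616],
   [3407452494169437022754, 5823784368929149872552],
   [-1599074030933661638092, 22590201624898364581142, 8108105899705610785804],
   [-53387839768717333156, -24067504451288415605828, -50898347820379401353102,
    32560177613239009722381],
   [-6277611788210425709095, 25119410100381034059376, 89383807016540607822895,
    -42511811972150825403333, -44126090135057927119799],
   [10682683887654864606955, -16999784460761109873500, -105057505786343656942882,
    17767342073446134429853, 196870340445027187709073, -233286594033666043370147],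
   [-13580342013816387366998, -15914181328956674649775, 64140844182455672694113,
    43025994372534741366518, -247757388054738618982631, 640350155573064701685677,
    -486287858447726397573586],
   [16555536779506779279684, 56212534888109806689393, 37498704593696527697253,
    -152757096955821501833217, 248926936922362247617601, -618528320697930479231708,
    966541018605175110477752, -449841446367258265007590],
   [-17835491163561685209907, -73264977331487216528537, -154521539065427581971379,
    245052453897676312878972, -198922275098925048009700, 455945326061207576712813,
    -699148623477133190411265, 535710207293269755277982, -72493063570681590802767],
   [11628308732512904300916, 64385569010735434974444, 248051441742114243539321,
    -288484819265777987655066, 122031673417369953548936, -249221495641854819975424,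
    351704536212435203050627, -120291704627710924792950, -219717331436419054517913,
    229808343872151345293833],
   [896970160227370183782, -48765213207365899918239, -293475163595132534595118,
    289857441391693012511692, -59053575718703997134754, 86935871846705425185477,
    -77891075576078722617646, -169196752040671274765539, 419814995719276980110094,
    -530116562979830801924485, 247587855887212830676641],
   [-12318045314878347451300, 37112784493220925734920, 280513399548914529620231,
    -258800533268654888245192, 26690307514797639122765, -2135034702279876845240,
    -59713618058726595624045, 265730085369471314477167, -410385090138515395103906,
    415809773790659579239584, -323613662995628517082403, 78341730971171539442271],
   [16983385206082001005603, -28824103339872580405579, -222600298115483579678235,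
    201989999811156747573602, -17492629539247259999746, -13163324196274593187852,
    69806026333436315639660, -196534600893732817023163, 240215343466391377130543,
    -177483609140491275743435, 74564883198794052150023, 42014372915471065251624,
    -76817397455830949894174],
   [-15000481268156001151569, 20561536357068988003956, 148509846008933437980382,
    -134458332369504799254855, 15261275574931285160597, -826562331185983744572,
    -25027100966930599185175, 73503944842645948510974, -47380849409814129343196,
    -42286228506361099062841, 126802187360885977285966, -183955989385626240720447,
    215789126685823828054941, -106356157460859734961948],
   [10054898728210361704133, -12361752078478293739239, -83869586777522102207720,
    74685382260932534345168, -11720337271193250124337, 13112058356797171412101,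
    -13138925378558057077202, 12939883145081232214762, -65180648935011767927071,
    146640722344568375691140, -202742032848847826927341, 218716140122138665309801,
    -206076317825286627289242, 172650968971349218112278, -62798769992035810139217],
   [-5411067212514263367871, 6174643434075626775331, 40328255432909845305624,
    -34410659933989376995731, 7207942798160366758113, -14407714997560844833428,
    23785350111798855664655, -38766194974853400880868, 83969023487843497639536,
    -139366012801463145138457, 170454874530450655800136, -169060445127489457022934,
    146302016237245382799224, -112894996109880224252519, 76686563061486677642392,
    -22265104079656840625162],
   [2385540420773470150111, -2553313082856815716055, -16497929930642831852763,
    13023694082463739126118, -3401842865065808101925, 9321727365619752620185,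
    -17278865299093641241646, 29658330849994643490153, -56498714564833070317152,
    85982720194740960026308, -100542796534572059862180, 96297325725750145804799,
    -80063853531649846685375, 59099556749842374628890, -38483788071043586912342,
    21584643913033467499377, -5095282131551065504755],
   [-859121893230538004674, 888650424381138733886, 5689723749853257489739, -3971017059200128956424,
    1187588579128658333939, -4209803875791528106589, 8269001593492166731565,
    -14464425013713762567292, 26392788397609832637719, -38846858813403081469376,
    44607251962113254883879, -42074558356454672870119, 34290308769877951604039,
    -24691033318899652861377, 15662483103799165787481, -8580325320924879084701,
    3973295157056789314401, -762819398946049618501],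
   [246083589544448124787, -261349300308899442417, -1612345586229411601319, 924811556265330605595,
    -268862757126181287936, 1360347346208446034200, -2811849526237522831864, 4991066802115806954694,
    -9018020867741222245562, 13156458027665113542445, -15045869810225417979651,
    14124285605797511920750, -11406196025193412917294, 8101801097194669683666,
    -5057287105406937718691, 2727251444229635825102, -1245408782728309330415, 472565110173465847629,
    -72472912893764316947],
   [-51788042220765587870, 66084212097037552292, 352412123290268484562, -135422752183758733879,
    14712186441353005811, -299760215926957702122, 670159719764914619020, -1211554702068382485108,
    2217075302008813495221, -3262770271061946927083, 3756180164901385625892,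
    -3535200020429793486526, 2847203025623679041800, -2007594620876149520245,
    1240313394949771555871, -661434144948850865183, 298800966332955888256, -112252059467255393981,
    34124292555796970453, -3981572815882267540],
   [5639851985328560585, -15382611935656587050, -47269921374343559708, -2638047981670389592,
    15576388995201762123, 32647548704875097818, -90573095235514043123, 168427917897389978896,
    -325908144568430277577, 500288583845374928124, -591699878709585914425, 564619970793818770516,
    -456238053247206671347, 320398463354598231742, -196241943570873489900, 103533509488900512032,
    -46233668490301603304, 17165034585055833636, -5159099278760520581, 1189314294676678800,
    -87277570847329070],
   [1011442517896092611, 3761178758703594899, -2759409441640760153, 8717468031809517083,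
    -6684112423214667234, 5625302325012291687, -7202409985441375199, 12872451952604228797,
    -14977733340875135599, 11085905681677524949, -4602130194245352185, 320529194381415158,
    876177916169898516, -533783833405469881, -10823414468430965, 253051018017847746,
    -240529670246640236, 140923327600784085, -57724615436598785, 17205810693559292,
    -3275943553072802, 25609707953008],
   [-742762847945169011, -1053268886848037236, 4035580718189387341, -3005515302275664178,
    1216184313244381630, -3978451717571218112, 8828025794847345178, -16874506397239896392,
    28210249146882995504, -37715373263309322537, 40651013155660286767, -36919828819258363218,
    29280345186691145982, -20532649142063449417, 12659993395393901937, -6744484004440551589,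
    3046065103623485598, -1144973924425413723, 348179217160123290, -81242956716880141,
    12057453688495462, 252409376542984, -436666903668782],
   [232742627827221591, 301176818756449076, -1443295105012749105, 620782701392123302,
    21226991994239079, 1231380022029397421, -3276359347195270659, 6419786462612699478,
    -11001183535066956253, 15058792204328193153, -16532450171888069781, 15168145964551674951,
    -12057087956596172060, 8428045741994948451, -5163296610998685283, 2729025430657911181,
    -1221851225791273900, 455054076013789670, -137095037538673421, 31650395856069468,
    -4618428256386927, -120257816425407, 340932195319248, -65579358992723],
   [-51833569444121734, -73523649942320612, 344125090260108982, -83779617962359026,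
    -71148779326243771, -289314606013809886, 862423429027891430, -1699487535084078548,
    2899547509470804049, -3963764060201916099, 4353759778511981303, -3992649512708235079,
    3166488877762225782, -2205163853706157442, 1344777412034760664, -707315674506180267,
    315092875852148030, -116739522880334986, 34981950580670417, -8024738484862589, 1157901301706114,
    34769998339938, -87064239277996, 33212296609764, -4188230822756],
   [9225620016685325, 14454760536550196, -61516029675137841, 6413066908843936, 20735777373215876,
    56391891563991997, -175444412787780181, 341933736441106606, -574906938544935638,
    779417375074768239, -852416187804843322, 779225286688016926, -616040161992805379,
    427663295927112240, -260018706250756715, 136389720055674549, -60602467063359206,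
    22396355295517506, -6694696687601015, 1531579048078632, -220103913006007, -6855919681030,
    16617883317939, -6323683924887, 1593631442544, -151704187996],
   [-1418865649144889, -2374568323294330, 8681097114430343, 264781139529399, -3918678470481810,
    -9150322820545179, 28370911131161968, -54309120298890166, 90138809191797887,
    -121423693119652742, 132306302861315866, -120584670267961433, 95085378773953434,
    -65887013734499357, 40017525779347280, -20982649692347012, 9322598362810793, -3445597136642930,
    1030347579072790, -235991053363466, 34077179753017, 961277459845, -2526213771755, 965495529805,
    -243873163362, 46531908867, -3577118859],
   [194000680692627, 335039341326586, -1029745217083334, -209472510002068, 616033938896102,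
    1205981948534325, -3722865395540245, 7094984050625809, -11806366941041330, 15926092377056874,
    -17327191457875964, 15745209520239617, -12383414797123532, 8571356571330826, -5207970301894768,
    2734001188760270, -1216372626174589, 450183071045038, -134860860328846, 30998148047779,
    -4529024688878, -98120784410, 322415309893, -124507288820, 31596560508, -6047757246, 932415419,
    -60957309],
   [-23314026302203, -43340268097515, 107588512622819, 55534303986889, -98888112212189,
    -120738410760090, 418202925908627, -832379632222432, 1416152498620749, -1919564145795234,
    2079831248144587, -1875258786290020, 1462789036299137, -1005573635880973, 607851627328254,
    -317794145559984, 140856402450126, -51926668699865, 15491803290194, -3545227505725,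
    515032484122, 11860340866, -36848996805, 14188801612, -3597192098, 688635870, -106311197,
    13948519, -800750],
   [1787103092631, 3041441100866, -9597698777823, -9040960933272, 11850321660431, 10817087827595,
    -41779791223402, 85416447990304, -145202643653551, 194465294823989, -207516233272824,
    183941584009228, -140811501503233, 94899710590540, -56245295092950, 28850539354386,
    -12556429837110, 4545234049061, -1330185760603, 297263296640, -41252883402, -1703285484,
    3242374367, -1211199199, 303346605, -57822297, 8926936, -1174263, 134785, -5594]]

/-- The table of coefficients `tᵢⱼ + tⱼᵢ` of `T(x, y) + T(y, x)`. -/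
def symmetrize (t : List (List ℤ)) : List (List ℤ) :=
  let entry i j := (t.getD i []).getD j 0
  (List.range t.length).map fun i => (List.range t.length).map fun j => entry i j + entry j i

/-- The symmetric coefficient table of the form `R` described at `pointCoeffs`. -/
def pairTable : List (List ℤ) := symmetrize halfPairTable

set_option maxRecDepth 100000 in
set_option exponentiation.threshold 10000 in
lemma dvd_modCoeffs_squareDefectCoeffs : ∀ c ∈ modCoeffs (lowCoeffsQ ++ [1])
    (squareDefectCoeffs 29 pairTable pointCoeffs (2 ^ 4500)),
    evalCoeffs (lowCoeffsQ ++ [1]) (2 ^ 4500) ∣ c := by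
  decide +kernel

/-- `Q` as a polynomial with integer coefficients. -/
noncomputable abbrev intQ : ℤ[X] := ofCoeffs (lowCoeffsQ ++ [1])

lemma map_intQ : intQ.map (Int.castRingHom ℚ) = Q := by
  rw [map_ofCoeffs]
  simp only [lowCoeffsQ, List.map_cons, List.map_nil, List.cons_append, List.nil_append,
    ofCoeffs_cons, ofCoeffs_nil, map_neg, map_ofNat, map_one, Q]
  ring

/-- The value at `x` of the polynomial `M` with coefficients `pointCoeffs`. -/
noncomputable abbrev pointForm {S : Type*} [CommRing S] (x : S) : S :=
  aeval x (ofCoeffs pointCoeffs)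

/-- The value at `(x, y)` of the symmetric polynomial `R` with coefficients `pairTable`. -/
noncomputable abbrev pairForm {S : Type*} [CommRing S] (x y : S) : S :=
  aevalAeval x y (ofCoeffs (pairTable.map ofCoeffs))

theorem pairForm_sq {S : Type*} [CommRing S] [IsDomain S] {x y : S} (hxy : x ≠ y)
    (hx : aeval x intQ = 0) (hy : aeval y intQ = 0) :
    pairForm x y ^ 2 = 29 * pointForm x * pointForm y := by
  have h := sq_aevalAeval_ofCoeffs_eq (w := 2 ^ 36) (by decide +kernel)
    (by set_option exponentiation.threshold 10000 in decide +kernel)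
    dvd_modCoeffs_squareDefectCoeffs hxy hx hy
  exact_mod_cast h

/-- Pairs `(a, u)` consisting of a root `a` of `Q` modulo 921157 and a square root `u` of `M(a)`, in
the order `0, 1, …, 28, ∞` of the projective line over `𝔽₂₉`. -/
def rootsMod : List (ℤ × ℤ) :=
  [(19772, 662015), (32340, 271579), (371834, 415794), (782625, 634395), (166400, 263743),
   (835882, 852484), (660649, 671470), (647232, 196790), (318668, 238406), (296282, 673727),
   (103163, 585721), (193177, 311350), (342477, 12819), (230636, 230494), (137065, 642496),
   (639539, 859365), (271099, 491321), (343572, 108529), (190321, 173183), (402818, 498166),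
   (917245, 580947), (130143, 260108), (159166, 858521), (200266, 648622), (436899, 247576),
   (856526, 415763), (887093, 37264), (533643, 165480), (862910, 824155), (5612, 207067)]

/-- The entry of `rootsMod` at a point of the projective line over `𝔽₂₉`. -/
def rootLabel (x : OnePoint (ZMod 29)) : ℤ × ℤ :=
  rootsMod.getD (x.elim 29 ZMod.val) 0

lemma dvd_evalCoeffs_rootLabel (x) : 921157 ∣ evalCoeffs (lowCoeffsQ ++ [1]) (rootLabel x).1 := by
  revert x
  decide +kernel

lemma not_dvd_rootLabel_snd (x) : ¬ 921157 ∣ (rootLabel x).2 := by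
  revert x
  decide +kernel

lemma evalCoeffs_pointCoeffs_rootLabel (x) :
    evalCoeffs pointCoeffs (rootLabel x).1 ≡ (rootLabel x).2 ^ 2 [ZMOD 921157] := by
  revert x
  decide +kernel

lemma fact_prime_twentyNine : Fact (Nat.Prime 29) := ⟨by norm_num⟩

attribute [local instance] fact_prime_twentyNine

set_option maxRecDepth 100000 in
lemma rootLabel_fst_modEq_imp_bracket_eq_zero : ∀ x y : OnePoint (ZMod 29),
    (rootLabel x).1 ≡ (rootLabel y).1 [ZMOD 921157] → bracket x y = 0 := by
  decide +kernel

-- 841664 is a square root of 29 modulo 921157.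
set_option maxRecDepth 100000 in
lemma evalCoeffs_pairTable_rootLabel : ∀ x y, bracket x y ≠ 0 →
    evalCoeffs (pairTable.map fun row => evalCoeffs row (rootLabel x).1) (rootLabel y).1 ≡
      quadraticChar (ZMod 29) (bracket x y) * 841664 * (rootLabel x).2 * (rootLabel y).2
      [ZMOD 921157] := by
  decide +kernel

lemma aeval_intQ_eq_zero_iff (b : ZMod 197) : aeval b intQ = 0 ↔ b = 59 := by
  rw [aeval_ofCoeffs]
  revert b
  decide +kernel

lemma aeval_derivative_intQ_ne_zero : aeval (59 : ZMod 197) (derivative intQ) ≠ 0 := by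
  rw [derivative_ofCoeffs, aeval_ofCoeffs]
  decide +kernel

lemma aeval_intQ_ne_zero_of_int (n : ℤ) : aeval n intQ ≠ 0 := by
  have hmod (b : ZMod 2) : aeval b intQ ≠ 0 := by
    rw [aeval_ofCoeffs]
    revert b
    decide +kernel
  intro h
  exact hmod n (by rw [← eq_intCast (Int.castRingHom (ZMod 2)) n, ← map_aeval_int, h, map_zero])

end Certificate

section RootsModuloPrimes

variable {A k : Type*} [CommRing A] [IsDomain A] [CommRing k]

lemma eq_of_map_eq_of_aeval_derivative_ne_zero {q : ℤ[X]} (f : A →+* k) {x y : A}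
    (hx : aeval x q = 0) (hy : aeval y q = 0) (hxy : f x = f y)
    (hderiv : aeval (f x) (derivative q) ≠ 0) : x = y := by
  by_contra hne
  obtain ⟨g, hg⟩ : X - C x ∣ q.map (algebraMap ℤ A) := by
    rwa [dvd_iff_isRoot, IsRoot, eval_map_algebraMap]
  have hgy : eval y g = 0 := by
    have h := congrArg (eval y) hg
    rw [eval_map_algebraMap, hy, eval_mul, eval_sub, eval_X, eval_C, eq_comm] at h
    exact (mul_eq_zero.mp h).resolve_left (sub_ne_zero.mpr (Ne.symm hne))
  have hgx : eval x g = aeval x (derivative q) := by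
    rw [← eval_map_algebraMap, ← derivative_map, hg]
    simp
  refine hderiv ?_
  calc aeval (f x) (derivative q) = f (aeval x (derivative q)) :=
        (map_aeval_int f x _).symm
    _ = eval (f y) (g.map f) := by rw [← hgx, ← eval_map_apply, hxy]
    _ = 0 := by rw [eval_map_apply, hgy, map_zero]

lemma exists_map_eq_of_splits [IsDomain k] {q : ℤ[X]} (hq : q.Monic)
    (hsplit : (q.map (algebraMap ℤ A)).Splits) (f : A →+* k) {a : k} (ha : aeval a q = 0) :
    ∃ x, aeval x q = 0 ∧ f x = a := by
  have hprod := congrArg (Polynomial.map f)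
    (hsplit.eq_prod_roots_of_monic (hq.map (algebraMap ℤ A)))
  have hroot : eval a ((q.map (algebraMap ℤ A)).map f) = 0 := by
    rwa [Polynomial.map_map, RingHom.ext_int (f.comp (algebraMap ℤ A)) (algebraMap ℤ k),
      eval_map_algebraMap]
  rw [hprod, Polynomial.map_multiset_prod, eval_multiset_prod, Multiset.prod_eq_zero_iff] at hroot
  simp only [Multiset.map_map, Multiset.mem_map] at hroot
  obtain ⟨x, hx, hxa⟩ := hroot
  refine ⟨x, ?_, ?_⟩
  · rw [← eval_map_algebraMap]; exact isRoot_of_mem_roots hx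
  · exact (sub_eq_zero.mp (by simpa using hxa)).symm

lemma exists_labelling [IsDomain k] {q : ℤ[X]} (hq : q.Monic)
    (hsplit : (q.map (algebraMap ℤ A)).Splits) (f : A →+* k) {X : Type*} [Fintype X]
    (hX : q.natDegree ≤ Fintype.card X) {a : X → k} (ha : Function.Injective a)
    (haq : ∀ i, aeval (a i) q = 0) :
    ∃ ι : X → A, (∀ i, f (ι i) = a i) ∧ Set.range ι = {x | aeval x q = 0} := by
  classical
  choose ι hroot hι using fun i => exists_map_eq_of_splits hq hsplit f (haq i)
  have hinj : Function.Injective ι := fun i j hij => ha (by rw [← hι, ← hι, hij])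
  have hmem (x : A) : x ∈ (q.map (algebraMap ℤ A)).roots.toFinset ↔ aeval x q = 0 := by
    rw [Multiset.mem_toFinset, mem_roots (hq.map _).ne_zero, IsRoot, eval_map_algebraMap]
  have hroots : Finset.univ.image ι = (q.map (algebraMap ℤ A)).roots.toFinset := by
    refine Finset.eq_of_subset_of_card_le (fun x hx => ?_) ?_
    · obtain ⟨i, -, rfl⟩ := Finset.mem_image.mp hx
      exact (hmem _).mpr (hroot i)
    · rw [Finset.card_image_of_injective _ hinj, Finset.card_univ]
      exact (Multiset.toFinset_card_le _).trans <| (card_roots' _).trans <|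
        natDegree_map_le.trans hX
  refine ⟨ι, hι, Set.ext fun x => ?_⟩
  rw [Set.mem_ofPred_eq, ← hmem, ← hroots]
  simp

end RootsModuloPrimes

lemma exists_permHom {G X Y : Type*} [Group G] [MulAction G Y] {ι : X → Y}
    (hι : Function.Injective ι) (hG : ∀ g : G, ∀ x, g • ι x ∈ Set.range ι) :
    ∃ φ : G →* Equiv.Perm X, ∀ g x, ι (φ g x) = g • ι x := by
  choose φ hφ using hG
  let φHom : G →* Function.End X :=
    { toFun := φ
      map_one' := funext fun x => hι (by rw [hφ, one_smul]; rfl)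
      map_mul' g h := funext fun x => hι (by
        rw [hφ, mul_smul, ← hφ h, ← hφ g]; rfl) }
  exact ⟨φHom.toHomPerm, hφ⟩

section Invariants

variable {A G : Type*} [CommRing A] [Group G] [MulSemiringAction G A]

lemma exists_smul_ne {R : Type*} [CommRing R] [Algebra R A] [Algebra.IsInvariant R A G] {x : A}
    (hx : x ∉ Set.range (algebraMap R A)) : ∃ σ : G, σ • x ≠ x := by
  by_contra! hfix
  exact hx (Algebra.IsInvariant.isInvariant x hfix)

end Invariants

section Frobenius

lemma exists_isMaximal_charP_quotient (A : Type*) [CommRing A] [IsDomain A] [CharZero A]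
    [Algebra.IsIntegral ℤ A] (p : ℕ) [Fact p.Prime] :
    ∃ I : Ideal A, I.IsMaximal ∧ CharP (A ⧸ I) p := by
  have := Int.ideal_span_isMaximal_of_prime p
  obtain ⟨I, hI, hover⟩ := Ideal.exists_maximal_ideal_liesOver_of_isIntegral (S := A)
    (Ideal.span {(p : ℤ)})
  refine ⟨I, hI, (CharP.charP_iff_prime_eq_zero Fact.out).mpr ?_⟩
  have hp : (p : ℤ) ∈ I.under ℤ := hover.over ▸ Ideal.mem_span_singleton_self _
  simpa using Ideal.Quotient.eq_zero_iff_mem.mpr (Ideal.mem_comap.mp hp)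

variable {A : Type*} [CommRing A]

lemma under_int_eq_span_singleton (p : ℕ) [Fact p.Prime] (I : Ideal A) [I.IsPrime]
    [CharP (A ⧸ I) p] : I.under ℤ = Ideal.span {(p : ℤ)} := by
  refine ((Int.ideal_span_isMaximal_of_prime p).eq_of_le Ideal.IsPrime.ne_top' ?_).symm
  rw [Ideal.span_singleton_le_iff_mem, Ideal.mem_comap, ← Ideal.Quotient.eq_zero_iff_mem]
  simp

lemma exists_mk_smul_eq_pow {G : Type*} [Group G] [Finite G] [MulSemiringAction G A]
    [Algebra.IsInvariant ℤ A G] (p : ℕ) [Fact p.Prime] (I : Ideal A) [I.IsPrime] [Finite (A ⧸ I)]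
    [CharP (A ⧸ I) p] : ∃ σ : G, ∀ x, Ideal.Quotient.mk I (σ • x) = Ideal.Quotient.mk I x ^ p := by
  obtain ⟨σ, hσ⟩ := IsArithFrobAt.exists_of_isInvariant ℤ G I
  refine ⟨σ, fun x => ?_⟩
  have h := hσ.mk_apply x
  rwa [under_int_eq_span_singleton p, Int.card_ideal_quot] at h

lemma exists_smul_eq_self_iff_eq_of_map_smul_eq_pow [IsDomain A] {G K : Type*} [Group G]
    [MulSemiringAction G A] [Field K] (p : ℕ) [Fact p.Prime] [CharP K p] (f : A →+* K) {σ : G}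
    (hσ : ∀ x, f (σ • x) = f x ^ p) {q : ℤ[X]} (hq : q.Monic)
    (hsplit : (q.map (algebraMap ℤ A)).Splits) {a : ZMod p} (ha : ∀ b, aeval b q = 0 ↔ b = a)
    (hderiv : aeval a (derivative q) ≠ 0) :
    ∃ x₀ : A, aeval x₀ q = 0 ∧ ∀ x, aeval x q = 0 → (σ • x = x ↔ x = x₀) := by
  let c := (ZMod.castHom dvd_rfl K : ZMod p →+* K)
  have hc (b : ZMod p) (r : ℤ[X]) : aeval (c b) r = c (aeval b r) :=
    (map_aeval_int c b r).symm
  obtain ⟨x₀, hx₀, hfx₀⟩ := exists_map_eq_of_splits hq hsplit f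
    (show aeval (c a) q = 0 by rw [hc, (ha a).mpr rfl, map_zero])
  have huniq {x : A} (hx : aeval x q = 0) (hxa : f x = c a) : x = x₀ :=
    eq_of_map_eq_of_aeval_derivative_ne_zero f hx hx₀ (hxa.trans hfx₀.symm) <| by
      rwa [hxa, hc, _root_.map_ne_zero]
  refine ⟨x₀, hx₀, fun x hx => ⟨fun hfix => huniq hx ?_, ?_⟩⟩
  · have hpow : f x ^ p = f x := by rw [← hσ, hfix]
    rw [← Subfield.mem_bot_iff_pow_eq_self, ← ZMod.fieldRange_castHom_eq_bot p] at hpow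
    obtain ⟨b, hb : c b = f x⟩ := hpow
    rw [← hb, (ha b).mp (c.injective ?_)]
    rw [map_zero, ← hc, hb, ← map_aeval_int, hx, map_zero]
  · rintro rfl
    refine huniq (by rw [aeval_smul, hx, smul_zero]) ?_
    rw [hσ, hfx₀, ← map_pow, ZMod.pow_card]

theorem exists_smul_eq_self_iff_eq [IsDomain A] [CharZero A] [Module.Finite ℤ A]
    (G : Type*) [Group G] [Finite G] [MulSemiringAction G A] [Algebra.IsInvariant ℤ A G]
    {q : ℤ[X]} (hq : q.Monic) (hsplit : (q.map (algebraMap ℤ A)).Splits) (p : ℕ) [Fact p.Prime]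
    {a : ZMod p} (ha : ∀ b, aeval b q = 0 ↔ b = a) (hderiv : aeval a (derivative q) ≠ 0) :
    ∃ (σ : G) (x₀ : A), aeval x₀ q = 0 ∧ ∀ x, aeval x q = 0 → (σ • x = x ↔ x = x₀) := by
  obtain ⟨I, _, _⟩ := exists_isMaximal_charP_quotient A p
  have hI : I ≠ ⊥ := by
    rintro rfl
    have h : (p : A) ∈ (⊥ : Ideal A) := Ideal.Quotient.eq_zero_iff_mem.mp (by simp)
    exact Nat.cast_ne_zero.mpr (Fact.out : p.Prime).ne_zero h
  have : Finite (A ⧸ I) := Ring.HasFiniteQuotients.finiteQuotient hI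
  let _ := Ideal.Quotient.field I
  obtain ⟨σ, hσ⟩ := exists_mk_smul_eq_pow (G := G) p I
  exact ⟨σ, exists_smul_eq_self_iff_eq_of_map_smul_eq_pow p (Ideal.Quotient.mk I) hσ hq hsplit
    ha hderiv⟩

end Frobenius

section Signs

variable {A k : Type*} [CommRing A] [IsDomain A] [CommRing k]

lemma eq_intCast_mul_of_sq_eq_sq (f : A →+* k) {x y : A} {ε : ℤ} (hε : ε = 1 ∨ ε = -1)
    (h : x ^ 2 = y ^ 2) (hf : f x = ε * f y) (hy : 2 * f y ≠ 0) : x = ε * y := by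
  rcases sq_eq_sq_iff_eq_or_eq_neg.mp h with rfl | rfl <;> rcases hε with rfl | rfl
  · simp
  · exact absurd (by linear_combination hf) hy
  · refine absurd ?_ hy
    rw [map_neg] at hf
    linear_combination -hf
  · simp

lemma exists_sq_eq_of_sq_eq_mul_sq [IsIntegrallyClosed A] {a b d : A} (h : a ^ 2 = d * b ^ 2)
    (hb : b ≠ 0) : ∃ r, r ^ 2 = d := by
  obtain ⟨r, rfl⟩ := (IsIntegrallyClosed.pow_dvd_pow_iff two_ne_zero).mp (Dvd.intro_left d h.symm)
  exact ⟨r, mul_right_cancel₀ (pow_ne_zero 2 hb) (by rw [← h]; ring)⟩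

variable {X : Type*} {M : X → A} {P : X → X → A} {e : X → X → ℤ} {d r : A} {u : X → k}

omit [IsDomain A] in
lemma triangle_sq_eq (hP : ∀ i j, i ≠ j → P i j ^ 2 = d * M i * M j) {i j l : X} (hij : i ≠ j)
    (hjl : j ≠ l) (hli : l ≠ i) :
    (P i j * P j l * P l i) ^ 2 = d * (d * (M i * M j * M l)) ^ 2 := by
  rw [mul_pow, mul_pow, hP i j hij, hP j l hjl, hP l i hli]
  ring

lemma triangle_eq [IsDomain k] (f : A →+* k) (hr : r ^ 2 = d)
    (hP : ∀ i j, i ≠ j → P i j ^ 2 = d * M i * M j)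
    (he : ∀ i j, i ≠ j → e i j = 1 ∨ e i j = -1)
    (hfP : ∀ i j, i ≠ j → f (P i j) = e i j * f r * u i * u j) (hfM : ∀ i, f (M i) = u i ^ 2)
    (hu : ∀ i, u i ≠ 0) (hfr : f r ≠ 0) (htwo : (2 : k) ≠ 0) {i j l : X} (hij : i ≠ j)
    (hjl : j ≠ l) (hli : l ≠ i) :
    P i j * P j l * P l i = (e i j * e j l * e l i : ℤ) * (r ^ 3 * (M i * M j * M l)) := by
  refine eq_intCast_mul_of_sq_eq_sq f ?_ ?_ ?_ ?_
  · rcases he i j hij with h₁ | h₁ <;> rcases he j l hjl with h₂ | h₂ <;>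
      rcases he l i hli with h₃ | h₃ <;> simp [h₁, h₂, h₃]
  · rw [triangle_sq_eq hP hij hjl hli, ← hr]
    ring
  · simp only [map_mul, map_pow, hfP i j hij, hfP j l hjl, hfP l i hli, hfM]
    push_cast
    ring
  · simp only [map_mul, map_pow, hfM]
    have := hu i; have := hu j; have := hu l
    positivity

lemma triangle_sign_map [CharZero A] {ε : X → X → X → ℤ}
    (hT : ∀ i j l, i ≠ j → j ≠ l → l ≠ i →
      P i j * P j l * P l i = ε i j l * (r ^ 3 * (M i * M j * M l)))
    (hr : r ≠ 0) (hM : ∀ i, M i ≠ 0) (g : A →+* A) {π : X → X} (hπ : Function.Injective π)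
    (hgM : ∀ i, g (M i) = M (π i)) (hgP : ∀ i j, g (P i j) = P (π i) (π j)) {s : ℤ}
    (hs : s = 1 ∨ s = -1) (hgr : g r = s * r) {i j l : X} (hij : i ≠ j) (hjl : j ≠ l)
    (hli : l ≠ i) : ε (π i) (π j) (π l) = s * ε i j l := by
  have hs3 : (s : A) ^ 3 = s := by rcases hs with rfl | rfl <;> norm_num
  have h := congrArg g (hT i j l hij hjl hli)
  simp only [map_mul, map_pow, map_intCast, hgP, hgM, hgr] at h
  rw [hT _ _ _ (hπ.ne hij) (hπ.ne hjl) (hπ.ne hli), mul_pow, hs3] at h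
  have hN : r ^ 3 * (M (π i) * M (π j) * M (π l)) ≠ 0 := by
    have := hM (π i); have := hM (π j); have := hM (π l)
    positivity
  refine Int.cast_injective (α := A) (mul_right_cancel₀ hN (h.trans ?_))
  push_cast
  ring

end Signs

section RootLabelling

attribute [local instance] fact_prime_twentyNine

variable {A k : Type*} [CommRing A] [CommRing k] [CharP k 921157] {f : A →+* k}

lemma map_pointForm_of_map_eq {x : A} {i : OnePoint (ZMod 29)} (hx : f x = (rootLabel i).1) :
    f (pointForm x) = ((rootLabel i).2 : k) ^ 2 := by
  rw [map_aeval_int, hx, aeval_intCast_ofCoeffs, ← Int.cast_pow,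
    CharP.intCast_eq_intCast k 921157]
  exact evalCoeffs_pointCoeffs_rootLabel i

lemma map_pairForm_of_map_eq {x y : A} {i j : OnePoint (ZMod 29)} (hij : i ≠ j)
    (hx : f x = (rootLabel i).1) (hy : f y = (rootLabel j).1) :
    f (pairForm x y) =
      (quadraticChar (ZMod 29) (bracket i j) : ℤ) * 841664 * (rootLabel i).2 * (rootLabel j).2 := by
  rw [map_aevalAeval_int, hx, hy, aevalAeval_intCast_ofCoeffs]
  exact_mod_cast (CharP.intCast_eq_intCast k 921157).mpr
    (evalCoeffs_pairTable_rootLabel i j (bracket_eq_zero_iff.not.mpr hij))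

lemma rootLabel_snd_cast_ne_zero (i) : ((rootLabel i).2 : k) ≠ 0 := by
  rw [Ne, CharP.intCast_eq_zero_iff k 921157]
  exact not_dvd_rootLabel_snd i

lemma rootLabel_fst_cast_injective :
    Function.Injective fun i => ((rootLabel i).1 : k) := fun i j hij =>
  bracket_eq_zero_iff.mp (rootLabel_fst_modEq_imp_bracket_eq_zero i j
    ((CharP.intCast_eq_intCast k 921157).mp hij))

lemma exists_rootLabelling [IsDomain A] [IsDomain k]
    (hsplit : (intQ.map (algebraMap ℤ A)).Splits) (f : A →+* k) :
    ∃ ι : OnePoint (ZMod 29) → A, (∀ i, f (ι i) = (rootLabel i).1) ∧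
      Set.range ι = {x | aeval x intQ = 0} := by
  refine exists_labelling (monic_ofCoeffs_concat _) hsplit f ?_ rootLabel_fst_cast_injective
    fun i => ?_
  · exact (natDegree_ofCoeffs_le _).trans (by decide)
  · rw [aeval_intCast_ofCoeffs, CharP.intCast_eq_zero_iff k 921157]
    exact dvd_evalCoeffs_rootLabel i

variable [IsDomain k] {ι : OnePoint (ZMod 29) → A}

lemma pointForm_ne_zero (hf : ∀ i, f (ι i) = (rootLabel i).1) (i) : pointForm (ι i) ≠ 0 :=
  ne_zero_of_map (f := f) (by
    rw [map_pointForm_of_map_eq (hf i)]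
    exact pow_ne_zero 2 (rootLabel_snd_cast_ne_zero i))

variable [IsDomain A]

lemma exists_sq_eq_twentyNine [CharZero A] [IsIntegrallyClosed A]
    (hf : ∀ i, f (ι i) = (rootLabel i).1) (hι : Function.Injective ι)
    (hroot : ∀ i, aeval (ι i) intQ = 0) : ∃ r : A, r ^ 2 = 29 ∧ f r = 841664 := by
  have hsq : ∀ i j, i ≠ j →
      pairForm (ι i) (ι j) ^ 2 = 29 * pointForm (ι i) * pointForm (ι j) :=
    fun i j hij => pairForm_sq (hι.ne hij) (hroot i) (hroot j)
  obtain ⟨r, hr⟩ := exists_sq_eq_of_sq_eq_mul_sq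
    (triangle_sq_eq (i := (0 : ZMod 29)) (j := (1 : ZMod 29)) (l := OnePoint.infty) hsq
      (OnePoint.coe_injective.ne zero_ne_one) (OnePoint.coe_ne_infty _) (OnePoint.infty_ne_coe _))
    (by simp [pointForm_ne_zero hf, -coe_aeval_eq_eval])
  have hfr : f r ^ 2 = 841664 ^ 2 := by
    rw [← map_pow, hr, map_ofNat]
    have h : ((29 : ℤ) : k) = ((841664 ^ 2 : ℤ) : k) :=
      (CharP.intCast_eq_intCast k 921157).mpr (by decide)
    exact_mod_cast h
  rcases sq_eq_sq_iff_eq_or_eq_neg.mp hfr with h | h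
  · exact ⟨r, hr, h⟩
  · exact ⟨-r, by rw [neg_sq, hr], by rw [map_neg, h, neg_neg]⟩

lemma triangle_pairForm_eq (hf : ∀ i, f (ι i) = (rootLabel i).1) (hι : Function.Injective ι)
    (hroot : ∀ i, aeval (ι i) intQ = 0) {r : A} (hr : r ^ 2 = 29) (hfr : f r = 841664)
    {i j l : OnePoint (ZMod 29)} (hij : i ≠ j) (hjl : j ≠ l) (hli : l ≠ i) :
    pairForm (ι i) (ι j) * pairForm (ι j) (ι l) * pairForm (ι l) (ι i) =
      (paleySign i j l : ℤ) *
        (r ^ 3 * (pointForm (ι i) * pointForm (ι j) * pointForm (ι l))) := by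
  have hne (n : ℤ) (hn : ¬ 921157 ∣ n) : (n : k) ≠ 0 := by
    rwa [Ne, CharP.intCast_eq_zero_iff k 921157]
  rw [paleySign, map_mul, map_mul]
  refine triangle_eq (P := fun i j => pairForm (ι i) (ι j)) (M := fun i => pointForm (ι i))
    (e := fun i j => quadraticChar (ZMod 29) (bracket i j)) (u := fun i => ((rootLabel i).2 : k))
    f hr (fun i j hij => pairForm_sq (hι.ne hij) (hroot i) (hroot j))
    (fun i j hij => quadraticChar_dichotomy (bracket_eq_zero_iff.not.mpr hij))
    (fun i j hij => ?_) (fun i => map_pointForm_of_map_eq (hf i)) rootLabel_snd_cast_ne_zero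
    ?_ ?_ hij hjl hli
  · rw [hfr]
    exact map_pairForm_of_map_eq hij (hf i) (hf j)
  · rw [hfr]
    exact_mod_cast hne 841664 (by decide)
  · exact_mod_cast hne 2 (by decide)

end RootLabelling

section SquareRoots

variable {A : Type*} [CommRing A]

lemma exists_smul_eq_intCast_mul [IsDomain A] (G : Type*) [Group G] [MulSemiringAction G A]
    {r : A} {d : ℕ} (hr : r ^ 2 = d) :
    ∃ s : G → ℤ, ∀ g, (s g = 1 ∨ s g = -1) ∧ g • r = s g * r := by
  suffices ∀ g : G, ∃ ε : ℤ, (ε = 1 ∨ ε = -1) ∧ g • r = ε * r from Classical.skolem.mp this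
  intro g
  have hg : (g • r) ^ 2 = r ^ 2 := by
    rw [← smul_pow', hr]
    exact map_natCast (MulSemiringAction.toRingHom G A g) d
  rcases sq_eq_sq_iff_eq_or_eq_neg.mp hg with h | h
  · exact ⟨1, .inl rfl, by simp [h]⟩
  · exact ⟨-1, .inr rfl, by simp [h]⟩

lemma notMem_range_algebraMap_int_of_sq_eq_prime [CharZero A] {r : A} {p : ℕ} (hp : p.Prime)
    (hr : r ^ 2 = p) : r ∉ Set.range (algebraMap ℤ A) := by
  rintro ⟨n, rfl⟩
  have hn : n ^ 2 = (p : ℤ) := (algebraMap ℤ A).injective_int (by simpa using hr)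
  exact (Nat.prime_iff_prime_int.mp hp).irreducible.not_isSquare ⟨n, by rw [← hn, sq]⟩

end SquareRoots

section GaloisGroup

attribute [local instance] fact_prime_twentyNine

variable {A G : Type*} [CommRing A] [IsDomain A] [CharZero A] [IsIntegrallyClosed A]
  [Group G] [MulSemiringAction G A] [Algebra.IsInvariant ℤ A G]

lemma exists_paleySign_eq_mul {k : Type*} [CommRing k] [IsDomain k] [CharP k 921157] {f : A →+* k}
    {ι : OnePoint (ZMod 29) → A} (hf : ∀ i, f (ι i) = (rootLabel i).1)
    (hι : Function.Injective ι) (hroot : ∀ i, aeval (ι i) intQ = 0)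
    {φ : G →* Equiv.Perm (OnePoint (ZMod 29))} (hφ : ∀ g i, ι (φ g i) = g • ι i) :
    ∃ s : G → ℤ, (∃ t, s t = -1) ∧
      ∀ g i j l, paleySign (φ g i) (φ g j) (φ g l) = s g * paleySign i j l := by
  obtain ⟨r, hr, hfr⟩ := exists_sq_eq_twentyNine hf hι hroot
  obtain ⟨s, hs⟩ := exists_smul_eq_intCast_mul G (r := r) (d := 29) (by exact_mod_cast hr)
  refine ⟨s, ?_, fun g i j l => ?_⟩
  · obtain ⟨t, ht⟩ := exists_smul_ne (R := ℤ) (G := G)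
      (notMem_range_algebraMap_int_of_sq_eq_prime (r := r) (p := 29) (by norm_num)
        (by exact_mod_cast hr))
    refine ⟨t, (hs t).1.resolve_left fun h => ht ?_⟩
    rw [(hs t).2, h, Int.cast_one, one_mul]
  · by_cases hd : i ≠ j ∧ j ≠ l ∧ l ≠ i
    · exact triangle_sign_map (P := fun i j => pairForm (ι i) (ι j))
        (M := fun i => pointForm (ι i)) (fun _ _ _ => triangle_pairForm_eq hf hι hroot hr hfr)
        (by rintro rfl; simp at hr) (pointForm_ne_zero hf) (MulSemiringAction.toRingHom G A g)
        (φ g).injective (fun i => by rw [map_aeval_int, hφ]; rfl)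
        (fun i j => by rw [map_aevalAeval_int, hφ, hφ]; rfl) (hs g).1 (hs g).2 hd.1 hd.2.1 hd.2.2
    · have hd' : ¬ (φ g i ≠ φ g j ∧ φ g j ≠ φ g l ∧ φ g l ≠ φ g i) := by
        simpa only [ne_eq, (φ g).injective.eq_iff] using hd
      rw [not_ne_iff.mp (paleySign_ne_zero_iff.not.mpr hd),
        not_ne_iff.mp (paleySign_ne_zero_iff.not.mpr hd'), mul_zero]

variable [Module.Finite ℤ A] [Finite G]

theorem nonempty_mulEquiv_of_splits_intQ (hsplit : (intQ.map (algebraMap ℤ A)).Splits)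
    (hfaithful : ∀ g : G, (∀ x : A, aeval x intQ = 0 → g • x = x) → g = 1) :
    Nonempty (G ≃* GL (Fin 2) (ZMod 29) ⧸ Subgroup.center (GL (Fin 2) (ZMod 29))) := by
  have : Fact (Nat.Prime 921157) := ⟨by norm_num⟩
  have : Fact (Nat.Prime 197) := ⟨by norm_num⟩
  obtain ⟨I, _, _⟩ := exists_isMaximal_charP_quotient A 921157
  obtain ⟨ι, hf, hrange⟩ := exists_rootLabelling hsplit (Ideal.Quotient.mk I)
  have hmem (x : A) : x ∈ Set.range ι ↔ aeval x intQ = 0 := by rw [hrange, Set.mem_ofPred_eq]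
  have hroot (i) : aeval (ι i) intQ = 0 := (hmem _).mp (Set.mem_range_self i)
  have hι : Function.Injective ι := .of_comp (f := Ideal.Quotient.mk I) (by
    simpa only [Function.comp_def, hf] using rootLabel_fst_cast_injective)
  obtain ⟨φ, hφ⟩ := exists_permHom (G := G) hι fun g i => by
    rw [hmem, aeval_smul, hroot, smul_zero]
  obtain ⟨s, ⟨t, ht⟩, hs⟩ := exists_paleySign_eq_mul hf hι hroot hφ
  obtain ⟨u, x₀, hx₀, hu⟩ := exists_smul_eq_self_iff_eq G (monic_ofCoeffs_concat _) hsplit 197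
    aeval_intQ_eq_zero_iff aeval_derivative_intQ_ne_zero
  obtain ⟨i₀, rfl⟩ := (hmem x₀).mpr hx₀
  obtain ⟨h, hh⟩ : ∃ h : G, h • ι i₀ ≠ ι i₀ := exists_smul_ne (R := ℤ) (by
    rintro ⟨n, hn⟩
    refine aeval_intQ_ne_zero_of_int n ((algebraMap ℤ A).injective_int ?_)
    rw [map_aeval_int, hn, hx₀, map_zero])
  refine nonempty_mulEquiv_of_paleySign (by norm_num) (φ := φ) ?_ hs (u := u) (h := h) (x₀ := i₀)
    (fun i => ?_) (fun hfix => hh ?_) ht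
  · refine (injective_iff_map_eq_one φ).mpr fun g hg => hfaithful g fun x hx => ?_
    obtain ⟨i, rfl⟩ := (hmem x).mpr hx
    rw [← hφ, hg, Equiv.Perm.one_apply]
  · rw [← hι.eq_iff, hφ, hu _ (hroot i), hι.eq_iff]
  · rw [← hφ, hfix]

end GaloisGroup

section SplittingFields

open NumberField

lemma splits_map_ringOfIntegers {L : Type*} [Field L] {q : ℤ[X]} (hq : q.Monic)
    (hsplit : (q.map (algebraMap ℤ L)).Splits) : (q.map (algebraMap ℤ (𝓞 L))).Splits := by
  have hmap : (q.map (algebraMap ℤ (𝓞 L))).map (algebraMap (𝓞 L) L) = q.map (algebraMap ℤ L) := by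
    rw [Polynomial.map_map, ← IsScalarTower.algebraMap_eq]
  refine Splits.of_splits_map_of_injective (i := algebraMap (𝓞 L) L)
    RingOfIntegers.coe_injective (hmap ▸ hsplit) fun x hx => ?_
  rw [hmap] at hx
  exact ⟨⟨x, q, hq, by simpa [eval_map] using (mem_roots'.mp hx).2⟩, rfl⟩

lemma eq_one_of_isSplittingField {F L : Type*} [Field F] [Field L] [Algebra F L] (q : F[X])
    [IsSplittingField F L q] {g : Gal(L/F)} (hg : ∀ x : L, aeval x q = 0 → g x = x) : g = 1 :=
  AlgEquiv.coe_toAlgHom_injective <|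
    AlgHom.ext_of_adjoin_eq_top (IsSplittingField.adjoin_rootSet L q) fun x hx =>
      hg x (mem_rootSet.mp hx).2

lemma aeval_intQ_eq_aeval_Q {L : Type*} [CommRing L] [Algebra ℚ L] (x : L) :
    aeval x intQ = aeval x Q := by
  rw [← map_intQ, ← algebraMap_int_eq, aeval_map_algebraMap]

theorem galoisGroup_Q_general {L : Type*} [Field L] {alg : Algebra ℚ L}
    [IsSplittingField ℚ L Q] :
    Nonempty (Gal(L/ℚ) ≃* GL (Fin 2) (ZMod 29) ⧸ Subgroup.center (GL (Fin 2) (ZMod 29))) := by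
  have : CharZero L := charZero_of_injective_algebraMap (algebraMap ℚ L).injective
  have : FiniteDimensional ℚ L := IsSplittingField.finiteDimensional L Q
  have : Normal ℚ L := .of_isSplittingField Q
  have : IsGalois ℚ L := IsGalois.mk
  obtain rfl : alg = DivisionRing.toRatAlgebra := Subsingleton.elim _ _
  have : NumberField L := { }
  have hmonic : intQ.Monic := monic_ofCoeffs_concat _
  have hsplit : (intQ.map (algebraMap ℤ L)).Splits := by
    rw [IsScalarTower.algebraMap_eq ℤ ℚ L, ← Polynomial.map_map, algebraMap_int_eq, map_intQ]
    exact IsSplittingField.splits L Q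
  refine nonempty_mulEquiv_of_splits_intQ (A := 𝓞 L) (splits_map_ringOfIntegers hmonic hsplit)
    fun g hg => eq_one_of_isSplittingField Q fun x hx => ?_
  rw [← aeval_intQ_eq_aeval_Q] at hx
  obtain ⟨y, rfl⟩ : ∃ y : 𝓞 L, algebraMap (𝓞 L) L y = x := ⟨⟨x, intQ, hmonic, hx⟩, rfl⟩
  rw [← map_aeval_int, FaithfulSMul.algebraMap_eq_zero_iff] at hx
  exact congrArg (algebraMap (𝓞 L) L) (hg y hx)

end SplittingFields

theorem galoisGroup_Q :
    Nonempty (Q.Gal ≃*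
      GL (Fin 2) (ZMod 29) ⧸ Subgroup.center (GL (Fin 2) (ZMod 29))) :=
  galoisGroup_Q_general
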